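/- arXiv:1004.5373 — 2 statements merged into one kernel-verified Lean document; each statement's English description precedes it below -/
import Mathlib

section
/- In the Hilly regime (n^{3/2}V(A(n))/k(n) → ∞ and m(n)/(V(A(n))·n²) → c for a fixed constant c > 0, with k(n)/√n → ∞), fix ε > 0 and set μ_H = V(A)n²/(2m). Then both under ST(m,n) and under PL_A(m,n), with probability tending to 1 as n → ∞ the sampled configuration Z satisfies simultaneously: (i) if H_A(Z) ≥ μ_H + ε then PL_A(Z) > ST(Z), and (ii) if H_A(Z) ≤ μ_H − ε then ST(Z) > PL_A(Z). -/
/-!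
The proof shows that the planted distribution is asymptotically indistinguishable from the
exponential tilt `Q(Z) = ST(Z) exp(H_A(Z)) / K`, where `K` is the mean of `exp H_A` under ST.
Since `Q / ST = exp(H_A - log K)` and `log K` is close to `μ_H`, comparing `H_A` with `μ_H` is
comparing `Q` with ST, and this in turn agrees with comparing PL with ST off a set that is small
under both distributions.

Closeness of PL and `Q` is measured by the relative entropy
`E_PL[log (PL / ST)] - E_PL[H_A] + log K`. Because `log (PL / ST)` is a sum over the bins, only
the binomial marginals of a single bin are needed, and no covariances. Write `λ = m / n`,
`v = (m - k) / n` and `S = n V(A)`.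

* `E_PL[H_A] = 2 μ_H` (`expected_HStat`), and `log K ≤ μ_H + o(1)` because `K` is an `m`-th power
  by the multinomial theorem (`log_mgf_le`).
* `E_PL[log (PL / ST)] ≤ μ_H + o(1)` (`expected_log_ratio_le`). For `y` binomial with mean `v`,
  `log (y + j)` is bounded above by its cubic Taylor polynomial at `v + j`, valid on the whole
  domain. Its variance term sums to about `-k / (2 v)`, which cancels the trapezoidal correction
  in the comparison of `Σ_j log (v + j)` with an integral. What is left is a sum of second-order
  remainders of `x log x - x` at `λ`, namely `S / (2 λ) = μ_H` to leading order.

The relative entropy is therefore `o(1)`. Being nonnegative, it also gives `log K ≥ μ_H - o(1)`.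
It dominates the squared Hellinger distance `Σ (√PL - √Q)²` (`hellinger_le`). If `H_A ≥ μ_H + ε`
but `PL ≤ ST`, or `H_A ≤ μ_H - ε` but `ST ≤ PL`, then `(√PL - √Q)²` is at least a positive
constant times `max(PL, ST)`, so the set of these configurations has vanishing probability under
both PL and ST (`bad_le`). In the Hilly regime all error terms are controlled by `1 / √S`, `1 / S`
and `k / (√n S)`, which tend to zero (`error_le`).
-/

open Finset Filter Topology

/-- Probability of configuration `z` of `m` balls in `n` bins under the standard
(uniform multinomial) distribution ST(m,n). -/
noncomputable def stProb (n m : ℕ) (z : Fin n → ℕ) : ℝ :=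
  if ∑ i, z i = m then
    ((Nat.factorial m : ℝ) / ∏ i, (Nat.factorial (z i) : ℝ)) * ((n : ℝ))⁻¹ ^ m
  else 0

/-- Probability of configuration `z` of `m` balls in `n` bins under the planted
distribution PL_A(m,n) with planting `a`. -/
noncomputable def plProb (n m : ℕ) (a : Fin n → ℕ) (z : Fin n → ℕ) : ℝ :=
  if (∑ i, z i = m) ∧ (∀ i, a i ≤ z i) then
    ((Nat.factorial (m - ∑ i, a i) : ℝ) / ∏ i, (Nat.factorial (z i - a i) : ℝ)) *
      ((n : ℝ))⁻¹ ^ (m - ∑ i, a i)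
  else 0

/-- Expectation of a statistic `T` with respect to a probability function `p` on
configurations. -/
noncomputable def expec {n : ℕ} (p : (Fin n → ℕ) → ℝ) (T : (Fin n → ℕ) → ℝ) : ℝ :=
  ∑' z : Fin n → ℕ, p z * T z

/-- Variance of a statistic `T` with respect to a probability function `p`. -/
noncomputable def varOf {n : ℕ} (p : (Fin n → ℕ) → ℝ) (T : (Fin n → ℕ) → ℝ) : ℝ :=
  ∑' z : Fin n → ℕ, p z * (T z - expec p T) ^ 2

/-- Probability of a set `s` of configurations with respect to a probability
function `p`. -/
noncomputable def probOf {n : ℕ} (p : (Fin n → ℕ) → ℝ) (s : Set (Fin n → ℕ)) : ℝ :=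
  ∑' z : Fin n → ℕ, Set.indicator s p z

/-- `V(A) = (Σ_i a_i²)/n − k²/n²` where `k = Σ_i a_i`. -/
noncomputable def plantV (n : ℕ) (a : Fin n → ℕ) : ℝ :=
  (∑ i, (a i : ℝ) ^ 2) / n - ((∑ i, (a i : ℝ)) / n) ^ 2

/-- `q_i = (n/m)(z_i − m/n)`. -/
noncomputable def qStat (n m : ℕ) (z : Fin n → ℕ) (i : Fin n) : ℝ :=
  ((n : ℝ) / m) * ((z i : ℝ) - (m : ℝ) / n)

/-- The Hilly-regime statistic `H_A(Z) = Σ_i a_i q_i`. -/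
noncomputable def HStat (n m : ℕ) (a : Fin n → ℕ) (z : Fin n → ℕ) : ℝ :=
  ∑ i, (a i : ℝ) * qStat n m z i

/-- The Flat-regime statistic `F_A(Z) = Σ_i a_i q_i²`. -/
noncomputable def FStat (n m : ℕ) (a : Fin n → ℕ) (z : Fin n → ℕ) : ℝ :=
  ∑ i, (a i : ℝ) * qStat n m z i ^ 2

/-- The Intermediate-regime statistic `I_A(Z) = Σ_i a_i q_i − (1/2) Σ_i a_i q_i²`. -/
noncomputable def IStat (n m : ℕ) (a : Fin n → ℕ) (z : Fin n → ℕ) : ℝ :=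
  HStat n m a z - (1/2) * FStat n m a z

/-- The standard normal cumulative distribution function `Φ`. -/
noncomputable def stdNormalCDF (x : ℝ) : ℝ :=
  ∫ t in Set.Iic x, Real.exp (-t ^ 2 / 2) / Real.sqrt (2 * Real.pi)

/-- Total variation distance `TV_A(m,n)` between ST(m,n) and PL_A(m,n). -/
noncomputable def tvDist (n m : ℕ) (a : Fin n → ℕ) : ℝ :=
  (1/2) * ∑' z : Fin n → ℕ, |stProb n m z - plProb n m a z|

/-- The Flat regime: `n^{3/2} V(A)/k → 0` and `m/(k n^{1/2}) → c`. -/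
def FlatRegime (A : (n : ℕ) → Fin n → ℕ) (m k : ℕ → ℕ) (c : ℝ) : Prop :=
  Tendsto (fun n : ℕ => (n : ℝ) ^ ((3 : ℝ)/2) * plantV n (A n) / (k n : ℝ)) atTop (𝓝 0) ∧
  Tendsto (fun n : ℕ => (m n : ℝ) / ((k n : ℝ) * Real.sqrt n)) atTop (𝓝 c)

/-- The Intermediate regime: `n^{3/2} V(A)/k → λ` and `m/(k n^{1/2}) → c`. -/
def IntermediateRegime (A : (n : ℕ) → Fin n → ℕ) (m k : ℕ → ℕ) (lam c : ℝ) : Prop :=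
  Tendsto (fun n : ℕ => (n : ℝ) ^ ((3 : ℝ)/2) * plantV n (A n) / (k n : ℝ)) atTop (𝓝 lam) ∧
  Tendsto (fun n : ℕ => (m n : ℝ) / ((k n : ℝ) * Real.sqrt n)) atTop (𝓝 c)

/-- The Hilly regime: `n^{3/2} V(A)/k → ∞` and `m/(V(A) n²) → c`. -/
def HillyRegime (A : (n : ℕ) → Fin n → ℕ) (m k : ℕ → ℕ) (c : ℝ) : Prop :=
  Tendsto (fun n : ℕ => (n : ℝ) ^ ((3 : ℝ)/2) * plantV n (A n) / (k n : ℝ)) atTop atTop ∧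
  Tendsto (fun n : ℕ => (m n : ℝ) / (plantV n (A n) * (n : ℝ) ^ 2)) atTop (𝓝 c)

/-- One of the three regimes holds (with its positive constants). -/
def SomeRegime (A : (n : ℕ) → Fin n → ℕ) (m k : ℕ → ℕ) : Prop :=
  (∃ c : ℝ, 0 < c ∧ FlatRegime A m k c) ∨
  (∃ lam c : ℝ, 0 < lam ∧ 0 < c ∧ IntermediateRegime A m k lam c) ∨
  (∃ c : ℝ, 0 < c ∧ HillyRegime A m k c)

/-- `μ_H = V(A)n²/(2m)`. -/
noncomputable def muH (n m : ℕ) (a : Fin n → ℕ) : ℝ :=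
  plantV n a * (n : ℝ) ^ 2 / (2 * m)

/-! ### Finite sums over configurations -/

/-- The finite set of configurations of `m` balls in `n` bins, which carries both distributions. -/
def confs (n m : ℕ) : Finset (Fin n → ℕ) := Finset.piAntidiag univ m

lemma mem_confs {n m : ℕ} {z : Fin n → ℕ} : z ∈ confs n m ↔ ∑ i, z i = m := by
  simp [confs, mem_piAntidiag]

lemma stProb_pos {n m : ℕ} (hn : 0 < n) {z : Fin n → ℕ} (hz : z ∈ confs n m) :
    0 < stProb n m z := by
  rw [mem_confs] at hz
  have : (0 : ℝ) < n := by exact_mod_cast hn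
  have h2 : 0 < ∏ i, (Nat.factorial (z i) : ℝ) :=
    prod_pos fun i _ => by exact_mod_cast Nat.factorial_pos _
  have h3 : (0 : ℝ) < Nat.factorial m := by exact_mod_cast Nat.factorial_pos _
  rw [stProb, if_pos hz]
  positivity

lemma plProb_nonneg (n m : ℕ) (a z : Fin n → ℕ) : 0 ≤ plProb n m a z := by
  unfold plProb
  split_ifs
  · have h2 : 0 < ∏ i, (Nat.factorial (z i - a i) : ℝ) :=
      prod_pos fun i _ => by exact_mod_cast Nat.factorial_pos _
    positivity
  · exact le_rfl

lemma plProb_add (n m : ℕ) (a y : Fin n → ℕ) (hk : ∑ i, a i ≤ m) :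
    plProb n m a (y + a) = stProb n (m - ∑ i, a i) y := by
  unfold plProb stProb
  have : (∑ i, (y + a) i = m ∧ ∀ i, a i ≤ (y + a) i) ↔ ∑ i, y i = m - ∑ i, a i := by
    simp only [Pi.add_apply, sum_add_distrib, Nat.le_add_left, implies_true, and_true]
    omega
  simp only [this]
  simp only [Pi.add_apply, Nat.add_sub_cancel]

/-- A planted configuration is the planting plus a standard configuration of the other balls. -/
lemma sum_plProb (n m : ℕ) (a : Fin n → ℕ) (hk : ∑ i, a i ≤ m) (f : (Fin n → ℕ) → ℝ) :
    ∑ z ∈ confs n m, plProb n m a z * f z =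
      ∑ y ∈ confs n (m - ∑ i, a i), stProb n (m - ∑ i, a i) y * f (y + a) := by
  symm
  refine sum_of_injOn (fun y => y + a) (fun x _ y _ h => by simpa using h) ?_ ?_ ?_
  · intro y hy
    simp only [mem_coe, mem_confs, Pi.add_apply, sum_add_distrib] at hy ⊢
    omega
  · intro z hz hz2
    rw [mem_confs] at hz
    rw [plProb, if_neg, zero_mul]
    rintro ⟨-, h⟩
    apply hz2
    refine ⟨z - a, ?_, ?_⟩
    · simp only [mem_coe, mem_confs, Pi.sub_apply]
      rw [sum_tsub_distrib _ (fun i _ => h i), hz]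
    · funext i
      simp [h i]
  · intro y _
    rw [plProb_add n m a y hk]

/-- The generating function of the standard distribution, with weights in any commutative
`ℝ`-algebra. -/
lemma stProb_gf {R : Type*} [CommRing R] [Algebra ℝ R] (n m : ℕ) (w : Fin n → R) :
    ∑ z ∈ confs n m, stProb n m z • ∏ i, w i ^ z i = ((n : ℝ)⁻¹ ^ m) • (∑ i, w i) ^ m := by
  rw [sum_pow_eq_sum_piAntidiag, smul_sum]
  refine sum_congr rfl fun z hz => ?_
  have hz' := mem_confs.1 hz
  rw [stProb, if_pos hz']
  have h2 : ∏ i, (Nat.factorial (z i) : ℝ) ≠ 0 :=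
    prod_ne_zero_iff.2 fun i _ => by exact_mod_cast Nat.factorial_ne_zero _
  have h3 : ((Nat.factorial m : ℝ) / ∏ i, (Nat.factorial (z i) : ℝ)) =
      (Nat.multinomial univ z : ℝ) := by
    rw [div_eq_iff h2, ← hz', ← Nat.multinomial_spec univ z]
    push_cast
    ring
  rw [h3, mul_comm, mul_smul, Nat.cast_smul_eq_nsmul, nsmul_eq_mul]

lemma sum_stProb (n m : ℕ) (hn : 0 < n) : ∑ z ∈ confs n m, stProb n m z = 1 := by
  have h := stProb_gf n m (fun _ : Fin n => (1 : ℝ))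
  have hn' : (n : ℝ) ≠ 0 := by exact_mod_cast hn.ne'
  simpa [← mul_pow, hn'] using h

/-- Factorial moments of one bin, read off the generating function in which only that bin is
marked. -/
lemma stProb_descFactorial (n m r : ℕ) (hn : 0 < n) (i : Fin n) :
    ∑ z ∈ confs n m, stProb n m z * ((z i).descFactorial r : ℝ) =
      (m.descFactorial r : ℝ) / (n : ℝ) ^ r := by
  have hn' : (n : ℝ) ≠ 0 := by exact_mod_cast hn.ne'
  have h := stProb_gf n m (fun j : Fin n => if j = i then (Polynomial.X : Polynomial ℝ) else 1)
  have h1 : ∀ z : Fin n → ℕ,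
      ∏ j, (if j = i then (Polynomial.X : Polynomial ℝ) else 1) ^ z j = Polynomial.X ^ z i := by
    intro z
    rw [prod_eq_single i] <;> simp +contextual
  have h2 : ∑ j : Fin n, (if j = i then (Polynomial.X : Polynomial ℝ) else 1) =
      Polynomial.X + Polynomial.C ((n : ℝ) - 1) := by
    rw [← add_sum_erase _ _ (mem_univ i)]
    rw [sum_congr rfl (g := fun _ => (1 : Polynomial ℝ))]
    · simp [Nat.cast_sub (Nat.succ_le_of_lt hn)]
    · intro x hx
      simp [ne_of_mem_erase hx]
  simp only [h1, h2] at h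
  have h3 := congrArg (fun p => Polynomial.eval 1 (Polynomial.derivative^[r] p)) h
  simp only [Polynomial.iterate_derivative_sum, Polynomial.iterate_derivative_smul,
    Polynomial.iterate_derivative_X_pow_eq_smul, Polynomial.iterate_derivative_X_add_pow,
    Polynomial.eval_finsetSum, Polynomial.eval_smul, Polynomial.eval_pow, Polynomial.eval_X,
    Polynomial.eval_add, Polynomial.eval_C, smul_eq_mul, one_pow, mul_one] at h3
  rw [h3]
  rcases le_or_gt r m with hrm | hrm
  · have h4 : (n : ℝ) ^ m = n ^ (m - r) * n ^ r := by rw [← pow_add, Nat.sub_add_cancel hrm]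
    rw [inv_pow, h4]
    simp only [add_sub_cancel, nsmul_eq_mul]
    field_simp
  · simp [Nat.descFactorial_of_lt hrm]

lemma cast_descFactorial_three (y : ℕ) :
    (y.descFactorial 3 : ℝ) = y * ((y : ℝ) - 1) * ((y : ℝ) - 2) := by
  rcases y with _ | _ | y
  · simp
  · simp [Nat.descFactorial]
  · simp [Nat.descFactorial]
    ring

lemma stProb_mean (n m : ℕ) (hn : 0 < n) (i : Fin n) :
    ∑ z ∈ confs n m, stProb n m z * (z i : ℝ) = m / n := by
  simpa using stProb_descFactorial n m 1 hn i

/-- The centred moments of orders one to three of a single bin, which is binomial. -/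
lemma stProb_central (n m : ℕ) (hn : 0 < n) (i : Fin n) :
    ∑ z ∈ confs n m, stProb n m z * ((z i : ℝ) - m / n) = 0 ∧
    ∑ z ∈ confs n m, stProb n m z * ((z i : ℝ) - m / n) ^ 2 = m / n * (1 - 1 / n) ∧
    ∑ z ∈ confs n m, stProb n m z * ((z i : ℝ) - m / n) ^ 3 =
      m / n * (1 - 1 / n) * (1 - 2 / n) := by
  have hn' : (n : ℝ) ≠ 0 := by exact_mod_cast hn.ne'
  have m0 := sum_stProb n m hn
  have m1 := stProb_mean n m hn i
  have m2 := stProb_descFactorial n m 2 hn i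
  have m3 := stProb_descFactorial n m 3 hn i
  simp only [Nat.cast_descFactorial_two, cast_descFactorial_three] at m2 m3
  set p := stProb n m
  refine ⟨?_, ?_, ?_⟩
  · have : ∀ z : Fin n → ℕ, p z * ((z i : ℝ) - m / n) = p z * z i - (m / n) * p z := by
      intro z; ring
    simp only [this, sum_sub_distrib, ← mul_sum, m0, m1]
    ring
  · have : ∀ z : Fin n → ℕ, p z * ((z i : ℝ) - m / n) ^ 2 = p z * (z i * ((z i : ℝ) - 1))
        + (1 - 2 * (m / n)) * (p z * z i) + (m / n) ^ 2 * p z := by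
      intro z; ring
    simp only [this, sum_add_distrib, ← mul_sum, m0, m1, m2]
    field_simp
    ring
  · have : ∀ z : Fin n → ℕ, p z * ((z i : ℝ) - m / n) ^ 3 =
        p z * (z i * ((z i : ℝ) - 1) * ((z i : ℝ) - 2))
        + (3 - 3 * (m / n)) * (p z * (z i * ((z i : ℝ) - 1)))
        + (1 - 3 * (m / n) + 3 * (m / n) ^ 2) * (p z * z i) - (m / n) ^ 3 * p z := by
      intro z; ring
    simp only [this, sum_add_distrib, sum_sub_distrib, ← mul_sum, m0, m1, m2, m3]
    field_simp
    ring

/-! ### Elementary inequalities for the logarithm -/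

/-- The cubic Taylor polynomial of the logarithm is an upper bound on its whole domain, because
the remainder is of even order. -/
lemma log_one_add_le_cubic {t : ℝ} (ht : -1 < t) :
    Real.log (1 + t) ≤ t - t ^ 2 / 2 + t ^ 3 / 3 := by
  let f : ℝ → ℝ := fun t => t - t ^ 2 / 2 + t ^ 3 / 3 - Real.log (1 + t)
  have hd : ∀ x, -1 < x → HasDerivAt f (x ^ 3 / (1 + x)) x := by
    intro x hx
    have h1 : (1 + x) ≠ 0 := by linarith
    have h2 := ((((hasDerivAt_id x).sub ((hasDerivAt_pow 2 x).div_const 2)).add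
      ((hasDerivAt_pow 3 x).div_const 3)).sub (((hasDerivAt_id x).const_add 1).log h1))
    refine HasDerivAt.congr_deriv (f := f) h2 ?_
    simp only [id]
    field_simp
    norm_num
    ring
  have key : 0 ≤ f t := by
    have f0 : f 0 = 0 := by simp [f]
    rcases le_total 0 t with h | h
    · have hm : MonotoneOn f (Set.Icc 0 t) := by
        refine monotoneOn_of_deriv_nonneg (convex_Icc _ _) ?_ ?_ ?_
        · exact fun x hx => (hd x (by linarith [hx.1])).continuousAt.continuousWithinAt
        · intro x hx
          rw [interior_Icc] at hx
          exact (hd x (by linarith [hx.1])).differentiableAt.differentiableWithinAt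
        · intro x hx
          rw [interior_Icc] at hx
          rw [(hd x (by linarith [hx.1])).deriv]
          have := hx.1
          positivity
      have := hm ⟨le_rfl, h⟩ ⟨h, le_rfl⟩ h
      linarith
    · have hm : AntitoneOn f (Set.Icc t 0) := by
        refine antitoneOn_of_deriv_nonpos (convex_Icc _ _) ?_ ?_ ?_
        · exact fun x hx => (hd x (by linarith [hx.1])).continuousAt.continuousWithinAt
        · intro x hx
          rw [interior_Icc] at hx
          exact (hd x (by linarith [hx.1])).differentiableAt.differentiableWithinAt
        · intro x hx
          rw [interior_Icc] at hx
          rw [(hd x (by linarith [hx.1])).deriv]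
          have h1 : x ^ 3 ≤ 0 := Odd.pow_nonpos (by decide) hx.2.le
          exact div_nonpos_of_nonpos_of_nonneg h1 (by linarith [hx.1])
      have := hm ⟨le_rfl, h⟩ ⟨h, le_rfl⟩ h
      linarith
  simp only [f] at key
  linarith

/-- An antiderivative of the logarithm. -/
noncomputable def logInt (x : ℝ) : ℝ := x * Real.log x - x

/-- Trapezoid rule for the concave logarithm, telescoped. -/
lemma sum_log_le (v : ℝ) (hv : 0 < v) (a : ℕ) :
    ∑ j ∈ range a, Real.log (v + (j + 1)) ≤
      logInt (v + a) - logInt v + (Real.log (v + a) - Real.log v) / 2 := by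
  induction a with
  | zero => simp
  | succ a ih =>
    rw [sum_range_succ]
    have hx : 0 < v + a := by positivity
    have h := Real.le_log_one_add_of_nonneg (x := 1 / (v + a)) (by positivity)
    have h1 : 1 + 1 / (v + a) = (v + (a + 1)) / (v + a) := by field_simp; ring
    have hx' : 0 < v + (a + 1) := by positivity
    rw [h1, Real.log_div hx'.ne' hx.ne'] at h
    have h2 : 2 * (1 / (v + a)) / (1 / (v + a) + 2) = 1 / (v + a + 1 / 2) := by
      field_simp; ring
    rw [h2, div_le_iff₀ (by positivity)] at h
    simp only [logInt] at ih ⊢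
    push_cast
    nlinarith

/-- Comparison of the sum of logarithms with the integral on each unit interval, telescoped. -/
lemma le_sum_log (M : ℕ) (hM : 0 < M) (k : ℕ) :
    logInt ((M : ℝ) + k) - logInt M ≤ ∑ j ∈ range k, Real.log ((M : ℝ) + (j + 1)) := by
  induction k with
  | zero => simp
  | succ k ih =>
    rw [sum_range_succ]
    have hM' : (0 : ℝ) < M := by exact_mod_cast hM
    have hx : 0 < (M : ℝ) + k := by positivity
    have hx' : 0 < (M : ℝ) + (k + 1) := by positivity
    have h := Real.log_le_sub_one_of_pos (div_pos hx' hx)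
    rw [Real.log_div hx'.ne' hx.ne'] at h
    have h2 : ((M : ℝ) + (k + 1)) / (M + k) - 1 = 1 / (M + k) := by
      field_simp; ring
    rw [h2, le_div_iff₀ hx] at h
    simp only [logInt] at ih ⊢
    push_cast
    nlinarith

/-- Second-order expansion of `logInt` at `x`; the leading constant `1 / 2` is sharp. -/
lemma logInt_sub_le {x b d : ℝ} (hx : 0 < x) (hxb : 0 < x + b) (hd : |b| / x ≤ d) (hd1 : d ≤ 1) :
    logInt (x + b) - logInt x ≤ b * Real.log x + b ^ 2 / (2 * x) * (1 + d) := by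
  set u := b / x with hu
  have hb : b = x * u := by rw [hu]; field_simp
  have hu1 : -1 < u := by
    rw [hb] at hxb
    by_contra hcon
    nlinarith
  have h1 : |u| ≤ d := by rw [hu, abs_div, abs_of_pos hx]; exact hd
  have hlog := log_one_add_le_cubic hu1
  have h2 : x + b = x * (1 + u) := by rw [hb]; ring
  have h3 : Real.log (x + b) = Real.log x + Real.log (1 + u) := by
    rw [h2, Real.log_mul hx.ne' (by linarith)]
  have h4 : b ^ 2 / (2 * x) * (1 + d) = x * (u ^ 2 / 2 * (1 + d)) := by
    rw [hb]; field_simp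
  have h5 : (1 + u) * Real.log (1 + u) - u ≤ u ^ 2 / 2 * (1 + d) := by
    have h6 : (1 + u) * Real.log (1 + u) ≤ (1 + u) * (u - u ^ 2 / 2 + u ^ 3 / 3) :=
      mul_le_mul_of_nonneg_left hlog (by linarith)
    have h7 : -u / 3 + 2 * u ^ 2 / 3 ≤ d := by
      have ha : u ^ 2 = |u| ^ 2 := (sq_abs u).symm
      have hb' : -u ≤ |u| := neg_le_abs u
      have hc : |u| ^ 2 ≤ |u| := by nlinarith [abs_nonneg u]
      linarith
    nlinarith [sq_nonneg u, mul_le_mul_of_nonneg_left h7 (sq_nonneg u)]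
  have h8 : logInt (x + b) - logInt x - b * Real.log x = x * ((1 + u) * Real.log (1 + u) - u) := by
    simp only [logInt]
    rw [h3, h2, hb]
    ring
  rw [h4]
  have := mul_le_mul_of_nonneg_left h5 hx.le
  linarith

lemma exp_le_quadratic {x d : ℝ} (hx : |x| ≤ d) (hd : d ≤ 1) :
    Real.exp x ≤ 1 + x + x ^ 2 / 2 * (1 + d) := by
  have h := Real.exp_bound (hx.trans hd) (n := 3) (by norm_num)
  simp [sum_range_succ, Nat.factorial] at h
  have h1 := (abs_le.1 h).2
  have h2 : |x| ^ 3 = x ^ 2 * |x| := by rw [← sq_abs x]; ring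
  rw [h2] at h1
  nlinarith [sq_nonneg x, mul_le_mul_of_nonneg_left hx (sq_nonneg x), abs_nonneg x,
    mul_nonneg (sq_nonneg x) (abs_nonneg x)]

/-! ### The expected log-likelihood ratio under the planted distribution -/

/-- The total squared deviation `S = Σ_i (a_i - k/n)²` of a planting; it equals `n V(A)`. -/
noncomputable def sqDev (n : ℕ) (a : Fin n → ℕ) : ℝ :=
  ∑ i, ((a i : ℝ) - (∑ j, (a j : ℝ)) / n) ^ 2

lemma sum_dev (n : ℕ) (hn : 0 < n) (a : Fin n → ℕ) :
    ∑ i, ((a i : ℝ) - (∑ j, (a j : ℝ)) / n) = 0 := by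
  have hn' : (n : ℝ) ≠ 0 := by exact_mod_cast hn.ne'
  rw [sum_sub_distrib]
  simp
  field_simp
  ring

lemma sqDev_eq (n : ℕ) (hn : 0 < n) (a : Fin n → ℕ) :
    sqDev n a = ∑ i, (a i : ℝ) ^ 2 - (∑ i, (a i : ℝ)) ^ 2 / n := by
  have hn' : (n : ℝ) ≠ 0 := by exact_mod_cast hn.ne'
  have h : ∀ i, ((a i : ℝ) - (∑ j, (a j : ℝ)) / n) ^ 2 =
      (a i : ℝ) ^ 2 - 2 * ((∑ j, (a j : ℝ)) / n) * a i + ((∑ j, (a j : ℝ)) / n) ^ 2 := by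
    intro i; ring
  simp only [sqDev, h, sum_add_distrib, sum_sub_distrib, ← mul_sum]
  simp
  field_simp
  ring

lemma sqDev_eq_plantV (n : ℕ) (hn : 0 < n) (a : Fin n → ℕ) : sqDev n a = n * plantV n a := by
  have hn' : (n : ℝ) ≠ 0 := by exact_mod_cast hn.ne'
  rw [sqDev_eq n hn, plantV]
  field_simp

lemma muH_eq (n m : ℕ) (hn : 0 < n) (a : Fin n → ℕ) :
    muH n m a = sqDev n a / (2 * ((m : ℝ) / n)) := by
  have hn' : (n : ℝ) ≠ 0 := by exact_mod_cast hn.ne'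
  rw [sqDev_eq_plantV n hn, muH]
  rcases eq_or_ne (m : ℝ) 0 with hm | hm
  · simp [hm]
  · field_simp

/-- The cubic upper bound for the logarithm, centred at the mean `v + (j + 1)`, so that its linear
term has mean zero; the quadratic term contributes the essential `-1 / (2 v)`. -/
lemma stProb_log_le (n M : ℕ) (hn : 0 < n) (hM : 0 < M) (i : Fin n) (j : ℕ) (v : ℝ)
    (hv : v = (M : ℝ) / n) :
    ∑ y ∈ confs n M, stProb n M y * Real.log ((y i : ℝ) + (j + 1)) ≤
      Real.log (v + (j + 1)) - 1 / (2 * v) + 1 / (2 * v * n) + (j + 1) / v ^ 2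
        + 1 / (3 * v ^ 2) := by
  have hn' : (0 : ℝ) < n := by exact_mod_cast hn
  have hM' : (0 : ℝ) < M := by exact_mod_cast hM
  have hv0 : 0 < v := by rw [hv]; positivity
  obtain ⟨c1, c2, c3⟩ := stProb_central n M hn i
  have c0 := sum_stProb n M hn
  rw [← hv] at c1 c2 c3
  set x : ℝ := v + (j + 1) with hx
  have hx0 : 0 < x := by positivity
  have hvx : v ≤ x := by rw [hx]; linarith [(Nat.cast_nonneg j : (0 : ℝ) ≤ j)]
  have hpt : ∀ y ∈ confs n M, stProb n M y * Real.log ((y i : ℝ) + (j + 1)) ≤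
      Real.log x * stProb n M y + x⁻¹ * (stProb n M y * ((y i : ℝ) - v))
      - (x⁻¹) ^ 2 / 2 * (stProb n M y * ((y i : ℝ) - v) ^ 2)
      + (x⁻¹) ^ 3 / 3 * (stProb n M y * ((y i : ℝ) - v) ^ 3) := by
    intro y hy
    have hp := (stProb_pos hn hy).le
    set t := ((y i : ℝ) - v) * x⁻¹ with ht
    have h1 : (y i : ℝ) + (j + 1) = x * (1 + t) := by
      rw [ht]; field_simp; rw [hx]; ring
    have h2 : 0 < 1 + t := by
      have : 0 < x * (1 + t) := by rw [← h1]; positivity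
      exact pos_of_mul_pos_right this hx0.le
    have h3 := log_one_add_le_cubic (t := t) (by linarith)
    rw [h1, Real.log_mul hx0.ne' h2.ne']
    have h4 := mul_le_mul_of_nonneg_left h3 hp
    have h5 : stProb n M y * (t - t ^ 2 / 2 + t ^ 3 / 3) =
      x⁻¹ * (stProb n M y * ((y i : ℝ) - v))
      - (x⁻¹) ^ 2 / 2 * (stProb n M y * ((y i : ℝ) - v) ^ 2)
      + (x⁻¹) ^ 3 / 3 * (stProb n M y * ((y i : ℝ) - v) ^ 3) := by rw [ht]; ring
    linarith
  refine (sum_le_sum hpt).trans ?_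
  simp only [sum_add_distrib, sum_sub_distrib, ← mul_sum, c0, c1, c2, c3]
  have hn1 : (1 : ℝ) ≤ n := by exact_mod_cast hn
  have hq0 : 0 ≤ 1 / (n : ℝ) := by positivity
  have hq1 : 1 / (n : ℝ) ≤ 1 := by rw [div_le_one hn']; exact hn1
  have e3 : (x⁻¹) ^ 3 / 3 * (v * (1 - 1 / n) * (1 - 2 / n)) ≤ 1 / (3 * v ^ 2) := by
    have h1 : (1 - 1 / (n : ℝ)) * (1 - 2 / n) ≤ 1 := by
      have : (2 : ℝ) / n = 2 * (1 / n) := by ring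
      rw [this]
      nlinarith
    have h2 : (x⁻¹) ^ 3 ≤ (v⁻¹) ^ 3 := by gcongr
    calc (x⁻¹) ^ 3 / 3 * (v * (1 - 1 / n) * (1 - 2 / n))
        = (x⁻¹) ^ 3 / 3 * v * ((1 - 1 / (n : ℝ)) * (1 - 2 / n)) := by ring
      _ ≤ (x⁻¹) ^ 3 / 3 * v * 1 := by gcongr
      _ ≤ (v⁻¹) ^ 3 / 3 * v * 1 := by gcongr
      _ = 1 / (3 * v ^ 2) := by field_simp
  -- the variance term is bounded below via `1 / x² ≥ (1 - 2 (j + 1) / v) / v²`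
  have e2 : 1 / (2 * v) - 1 / (2 * v * n) - (j + 1) / v ^ 2 ≤
      (x⁻¹) ^ 2 / 2 * (v * (1 - 1 / n)) := by
    have h1 : (1 - 2 * (j + 1) / v) / v ^ 2 ≤ (x⁻¹) ^ 2 := by
      rw [inv_pow, div_le_iff₀ (by positivity), inv_mul_eq_div, le_div_iff₀ (by positivity), hx]
      have : (1 - 2 * ((j : ℝ) + 1) / v) * (v + (j + 1)) ^ 2 =
          v ^ 2 - (j + 1) ^ 2 * (3 + 2 * (j + 1) / v) := by
        field_simp; ring
      rw [this]
      have : 0 ≤ ((j : ℝ) + 1) ^ 2 * (3 + 2 * (j + 1) / v) := by positivity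
      linarith
    have h2 : 0 ≤ v * (1 - 1 / (n : ℝ)) / 2 := by
      have : 0 ≤ 1 - 1 / (n : ℝ) := by linarith
      positivity
    have h3 := mul_le_mul_of_nonneg_right h1 h2
    have h4 : (1 - 2 * (j + 1) / v) / v ^ 2 * (v * (1 - 1 / (n : ℝ)) / 2) =
        1 / (2 * v) - 1 / (2 * v * n) - (j + 1) / v ^ 2 + (1 / n) * ((j + 1) / v ^ 2) := by
      field_simp
      ring
    have h5 : 0 ≤ 1 / (n : ℝ) * ((j + 1) / v ^ 2) := by positivity
    linarith
  linarith

lemma log_stProb (n m : ℕ) (hn : 0 < n) (z : Fin n → ℕ) (hz : z ∈ confs n m) :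
    Real.log (stProb n m z) = Real.log (m.factorial : ℝ) - ∑ i, Real.log ((z i).factorial : ℝ)
      - m * Real.log n := by
  have hn' : (n : ℝ) ≠ 0 := by exact_mod_cast hn.ne'
  have hf : ∀ q : ℕ, (q.factorial : ℝ) ≠ 0 := fun q => by exact_mod_cast Nat.factorial_ne_zero _
  have h2 : ∏ i, (Nat.factorial (z i) : ℝ) ≠ 0 := prod_ne_zero_iff.2 fun i _ => hf _
  rw [stProb, if_pos (mem_confs.1 hz), Real.log_mul (div_ne_zero (hf _) h2) (by positivity),
    Real.log_div (hf _) h2, Real.log_prod (fun i _ => hf _), Real.log_pow, Real.log_inv]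
  ring

lemma log_factorial_add (y a : ℕ) : Real.log ((y + a).factorial : ℝ) =
    Real.log (y.factorial : ℝ) + ∑ j ∈ range a, Real.log ((y : ℝ) + (j + 1)) := by
  induction a with
  | zero => simp
  | succ a ih =>
    have hf : ((y + a).factorial : ℝ) ≠ 0 := by exact_mod_cast Nat.factorial_ne_zero _
    rw [sum_range_succ, ← add_assoc (Real.log _), ← ih, ← add_assoc y, Nat.factorial_succ,
      Nat.cast_mul, Real.log_mul (by positivity) hf]
    push_cast
    ring_nf

lemma log_ratio (n m : ℕ) (hn : 0 < n) (a y : Fin n → ℕ) (hk : ∑ i, a i ≤ m)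
    (hy : y ∈ confs n (m - ∑ i, a i)) :
    Real.log (plProb n m a (y + a)) - Real.log (stProb n m (y + a)) =
      ∑ i, ∑ j ∈ range (a i), Real.log ((y i : ℝ) + (j + 1))
      - ∑ j ∈ range (∑ i, a i), Real.log (((m - ∑ i, a i : ℕ) : ℝ) + (j + 1))
      + (∑ i, (a i : ℝ)) * Real.log n := by
  have hz : y + a ∈ confs n m := by
    rw [mem_confs] at hy ⊢
    simp only [Pi.add_apply, sum_add_distrib]
    omega
  rw [plProb_add n m a y hk, log_stProb n _ hn y hy, log_stProb n m hn _ hz]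
  have h1 := log_factorial_add (m - ∑ i, a i) (∑ i, a i)
  rw [Nat.sub_add_cancel hk] at h1
  simp only [Pi.add_apply, log_factorial_add, sum_add_distrib]
  rw [h1, Nat.cast_sub hk]
  push_cast
  ring

lemma logInt_mul {c x : ℝ} (hc : 0 < c) (hx : 0 < x) :
    logInt (c * x) = c * logInt x + c * x * Real.log c := by
  simp only [logInt, Real.log_mul hc.ne' hx.ne']
  ring

/-- The expected log-likelihood ratio under the planted distribution exceeds `muH` by at most
error terms that vanish in the Hilly regime. -/
lemma expected_log_ratio_le (n m : ℕ) (hn : 0 < n) (a : Fin n → ℕ) (hk : ∑ i, a i < m) (v d : ℝ)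
    (hv : v = ((m : ℝ) - ∑ i, (a i : ℝ)) / n)
    (hd : ∀ i, |(a i : ℝ) - (∑ j, (a j : ℝ)) / n| / ((m : ℝ) / n) ≤ d) (hd1 : d ≤ 1) :
    ∑ z ∈ confs n m, plProb n m a z * (Real.log (plProb n m a z) - Real.log (stProb n m z)) ≤
      muH n m a * (1 + d) + (∑ i, (a i : ℝ)) / (2 * v * n)
        + (∑ i, (a i : ℝ) ^ 2) / v ^ 2 + (∑ i, (a i : ℝ)) / (3 * v ^ 2) := by
  have hn' : (0 : ℝ) < n := by exact_mod_cast hn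
  have hM : 0 < m - ∑ i, a i := by omega
  have hMc : ((m - ∑ i, a i : ℕ) : ℝ) = (m : ℝ) - ∑ i, (a i : ℝ) := by
    rw [Nat.cast_sub hk.le]; push_cast; rfl
  have hv' : v = ((m - ∑ i, a i : ℕ) : ℝ) / n := by rw [hMc, hv]
  have hv0 : 0 < v := by
    rw [hv']
    have : (0 : ℝ) < ((m - ∑ i, a i : ℕ) : ℝ) := by exact_mod_cast hM
    positivity
  have hm0 : (0 : ℝ) < m := by exact_mod_cast (by omega : 0 < m)
  have c0 := sum_stProb n (m - ∑ i, a i) hn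
  rw [sum_plProb n m a hk.le]
  set K : ℝ := ∑ i, (a i : ℝ) with hK
  set l : ℝ := (m : ℝ) / n with hl
  have hl0 : 0 < l := by positivity
  have step1 : ∑ y ∈ confs n (m - ∑ i, a i), stProb n (m - ∑ i, a i) y *
      (Real.log (plProb n m a (y + a)) - Real.log (stProb n m (y + a))) =
      ∑ i, ∑ j ∈ range (a i), ∑ y ∈ confs n (m - ∑ i, a i), stProb n (m - ∑ i, a i) y *
        Real.log ((y i : ℝ) + (j + 1))
      - ∑ j ∈ range (∑ i, a i), Real.log (((m - ∑ i, a i : ℕ) : ℝ) + (j + 1))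
      + K * Real.log n := by
    rw [sum_congr rfl (fun y hy => by rw [log_ratio n m hn a y hk.le hy])]
    simp only [mul_add, mul_sub, sum_add_distrib, sum_sub_distrib, ← sum_mul, c0, one_mul]
    congr 2
    simp only [mul_sum]
    rw [sum_comm]
    refine sum_congr rfl fun i _ => ?_
    rw [sum_comm]
  rw [step1]
  have step2 : ∀ i, ∑ j ∈ range (a i), ∑ y ∈ confs n (m - ∑ i, a i),
      stProb n (m - ∑ i, a i) y * Real.log ((y i : ℝ) + (j + 1)) ≤
      (logInt (v + a i) - logInt v) + a i / (2 * v * n) + (a i : ℝ) ^ 2 / v ^ 2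
        + a i / (3 * v ^ 2) := by
    intro i
    refine (sum_le_sum fun j _ => stProb_log_le n _ hn hM i j v hv').trans ?_
    simp only [sum_add_distrib, sum_sub_distrib, ← sum_div, sum_const, card_range, nsmul_eq_mul,
      mul_one]
    have h1 := sum_log_le v hv0 (a i)
    have h2 : Real.log (v + a i) - Real.log v ≤ a i / v := by
      rw [← Real.log_div (by positivity) hv0.ne']
      refine (Real.log_le_sub_one_of_pos (by positivity)).trans (le_of_eq ?_)
      field_simp
      ring
    have h3 : (∑ j ∈ range (a i), (j : ℝ)) + (a i : ℝ) ≤ (a i : ℝ) ^ 2 := by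
      have : ∀ q : ℕ, (∑ j ∈ range q, (j : ℝ)) = q * (q - 1) / 2 := by
        intro q
        induction q with
        | zero => simp
        | succ q ih => rw [sum_range_succ, ih]; push_cast; ring
      rw [this]
      have : (a i : ℝ) ≤ (a i : ℝ) ^ 2 := by exact_mod_cast Nat.le_self_pow (by norm_num) _
      linarith
    have h4 : ((∑ j ∈ range (a i), (j : ℝ)) + (a i : ℝ)) / v ^ 2 ≤ (a i : ℝ) ^ 2 / v ^ 2 := by
      gcongr
    have h5 : (a i : ℝ) / (2 * v) = a i / v / 2 := by field_simp
    linarith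
  have step3 := sum_le_sum fun i (_ : i ∈ (univ : Finset (Fin n))) => step2 i
  simp only [sum_add_distrib, sum_sub_distrib, ← sum_div, sum_const, card_univ, Fintype.card_fin,
    nsmul_eq_mul] at step3
  have step4 := le_sum_log (m - ∑ i, a i) hM (∑ i, a i)
  have hkc : ((∑ i, a i : ℕ) : ℝ) = K := by rw [hK]; push_cast; rfl
  rw [hkc] at step4
  -- rescaling by `n` matches the integral over `[M, m]` with `n` copies of that over `[v, l]`
  have h8 : ((m - ∑ i, a i : ℕ) : ℝ) = n * v := by rw [hv']; field_simp
  have h9 : ((m - ∑ i, a i : ℕ) : ℝ) + K = n * l := by rw [hMc, hl]; field_simp; ring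
  rw [h9, h8, logInt_mul hn' hl0, logInt_mul hn' hv0] at step4
  have h10 : K = n * l - n * v := by linarith
  have step5 : ∑ i, (logInt (v + a i) - logInt l) ≤ muH n m a * (1 + d) := by
    have hb : ∀ i, v + a i = l + ((a i : ℝ) - K / n) := by
      intro i
      rw [hv, hl]; ring
    have : ∀ i, logInt (v + a i) - logInt l ≤ ((a i : ℝ) - K / n) * Real.log l +
        ((a i : ℝ) - K / n) ^ 2 / (2 * l) * (1 + d) := by
      intro i
      rw [hb]
      exact logInt_sub_le hl0 (by rw [← hb]; positivity) (hd i) hd1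
    refine (sum_le_sum fun i _ => this i).trans ?_
    rw [sum_add_distrib, ← sum_mul, ← sum_mul, ← sum_div, sum_dev n hn, muH_eq n m hn, zero_mul,
      zero_add, sqDev]
  rw [sum_sub_distrib] at step5
  simp only [sum_const, card_univ, Fintype.card_fin, nsmul_eq_mul] at step5
  have h11 : K * Real.log n = n * l * Real.log n - n * v * Real.log n := by rw [h10]; ring
  rw [h8]
  linarith

/-- The mean of the statistic under the planted distribution is `2 μ_H`. -/
lemma expected_HStat (n m : ℕ) (hn : 0 < n) (a : Fin n → ℕ) (hk : ∑ i, a i < m) :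
    ∑ z ∈ confs n m, plProb n m a z * HStat n m a z = 2 * muH n m a := by
  have hn' : (0 : ℝ) < n := by exact_mod_cast hn
  have hm0 : (0 : ℝ) < m := by exact_mod_cast (by omega : 0 < m)
  rw [sum_plProb n m a hk.le]
  have c0 := sum_stProb n (m - ∑ i, a i) hn
  have c1 := stProb_mean n (m - ∑ i, a i) hn
  have hMc : ((m - ∑ i, a i : ℕ) : ℝ) = (m : ℝ) - ∑ i, (a i : ℝ) := by
    rw [Nat.cast_sub hk.le]; push_cast; rfl
  set p := stProb n (m - ∑ i, a i)
  have h1 : ∀ y : Fin n → ℕ, p y * HStat n m a (y + a) =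
      ∑ i, ((a i : ℝ) * (n / m) * (p y * y i) + (a i : ℝ) * (n / m) * (a i - m / n) * p y) := by
    intro y
    rw [HStat, mul_sum]
    refine sum_congr rfl fun i _ => ?_
    simp only [qStat, Pi.add_apply]
    push_cast
    ring
  simp only [h1]
  rw [sum_comm]
  simp only [sum_add_distrib, ← mul_sum, c0, c1, hMc]
  rw [← sum_add_distrib, muH_eq n m hn, sqDev_eq n hn]
  have h2 : ∀ i, (a i : ℝ) * (n / m) * (((m : ℝ) - ∑ i, (a i : ℝ)) / n) +
      (a i : ℝ) * (n / m) * (a i - m / n) * 1 =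
      (n / m) * (a i : ℝ) ^ 2 - (∑ i, (a i : ℝ)) / m * a i := by
    intro i
    field_simp
    ring
  simp only [h2, sum_sub_distrib, ← mul_sum]
  field_simp

/-- The statistic is linear in the configuration, so its exponential mean under the standard
distribution is the `m`-th power of an average over the bins. -/
lemma log_mgf_le (n m : ℕ) (hn : 0 < n) (hm : 0 < m) (a : Fin n → ℕ) (d : ℝ)
    (hd : ∀ i, |(a i : ℝ) - (∑ j, (a j : ℝ)) / n| / ((m : ℝ) / n) ≤ d) (hd1 : d ≤ 1) :
    Real.log (∑ z ∈ confs n m, stProb n m z * Real.exp (HStat n m a z)) ≤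
      muH n m a * (1 + d) := by
  have hn' : (0 : ℝ) < n := by exact_mod_cast hn
  have hm0 : (0 : ℝ) < m := by exact_mod_cast hm
  have : Nonempty (Fin n) := ⟨⟨0, hn⟩⟩
  set l : ℝ := (m : ℝ) / n with hl
  have hl0 : 0 < l := by positivity
  set b : Fin n → ℝ := fun i => (a i : ℝ) - (∑ j, (a j : ℝ)) / n with hb
  have h1 : ∀ z ∈ confs n m, stProb n m z * Real.exp (HStat n m a z) =
      stProb n m z • ∏ i, Real.exp (b i / l) ^ z i := by
    intro z hz
    have hz' : ∑ i, (z i : ℝ) = m := by exact_mod_cast mem_confs.1 hz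
    rw [smul_eq_mul]
    congr 1
    simp only [← Real.exp_nat_mul]
    rw [← Real.exp_sum]
    congr 1
    have e1 : HStat n m a z = (n / m) * (∑ i, (a i : ℝ) * z i) - ∑ i, (a i : ℝ) := by
      rw [HStat, mul_sum, ← sum_sub_distrib]
      refine sum_congr rfl fun i _ => ?_
      rw [qStat]
      field_simp
    have e2 : ∑ i, (z i : ℝ) * (b i / l) =
        (n / m) * (∑ i, (a i : ℝ) * z i) - ((∑ j, (a j : ℝ)) / m) * ∑ i, (z i : ℝ) := by
      rw [mul_sum, mul_sum, ← sum_sub_distrib]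
      refine sum_congr rfl fun i _ => ?_
      simp only [hb, hl]
      field_simp
    rw [e1, e2, hz']
    field_simp
  rw [sum_congr rfl h1, stProb_gf, smul_eq_mul, ← mul_pow, Real.log_pow]
  have hpos : 0 < ∑ i, Real.exp (b i / l) := sum_pos (fun i _ => Real.exp_pos _) univ_nonempty
  have h2 := Real.log_le_sub_one_of_pos (mul_pos (inv_pos.2 hn') hpos)
  have h3 : ∑ i, Real.exp (b i / l) ≤
      ∑ i, (1 + b i / l + (b i / l) ^ 2 / 2 * (1 + d)) := by
    refine sum_le_sum fun i _ => exp_le_quadratic ?_ hd1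
    rw [abs_div, abs_of_pos hl0]
    exact hd i
  have h4 : ∑ i, (1 + b i / l + (b i / l) ^ 2 / 2 * (1 + d)) =
      n + sqDev n a / l ^ 2 / 2 * (1 + d) := by
    have : ∑ i, b i = 0 := sum_dev n hn a
    simp only [sum_add_distrib, ← sum_mul, ← sum_div, div_pow, this]
    simp [sqDev, hb]
  rw [h4] at h3
  calc (m : ℝ) * Real.log ((n : ℝ)⁻¹ * ∑ i, Real.exp (b i / l))
      ≤ m * ((n : ℝ)⁻¹ * (n + sqDev n a / l ^ 2 / 2 * (1 + d)) - 1) := by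
        refine mul_le_mul_of_nonneg_left (h2.trans ?_) hm0.le
        gcongr
    _ = muH n m a * (1 + d) := by
        rw [muH_eq n m hn, ← hl]
        have : (m : ℝ) = n * l := by rw [hl]; field_simp
        rw [this]
        field_simp
        ring

/-! ### From relative entropy to the likelihood comparison -/

/-- The squared Hellinger distance from `P` to the exponential tilt of `T` by `H` is at most the
relative entropy, written out as in `expected_log_ratio_le` and `log_mgf_le`. -/
lemma hellinger_le {ι : Type*} (s : Finset ι) (P T H : ι → ℝ) (K : ℝ)
    (hP : ∀ z ∈ s, 0 ≤ P z) (hT : ∀ z ∈ s, 0 < T z) (hP1 : ∑ z ∈ s, P z = 1) (hK : 0 < K)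
    (hKs : ∑ z ∈ s, T z * Real.exp (H z) = K) :
    ∑ z ∈ s, (√(P z) - √(T z * Real.exp (H z) / K)) ^ 2 ≤
      ∑ z ∈ s, P z * (Real.log (P z) - Real.log (T z)) - ∑ z ∈ s, P z * H z + Real.log K := by
  have hpt : ∀ z ∈ s, (√(P z) - √(T z * Real.exp (H z) / K)) ^ 2 ≤
      P z * (Real.log (P z) - Real.log (T z)) - P z * H z + Real.log K * P z
        - P z + T z * Real.exp (H z) / K := by
    intro z hz
    set Q := T z * Real.exp (H z) / K with hQ
    have hQ0 : 0 < Q := by have := hT z hz; positivity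
    have hlQ : Real.log Q = Real.log (T z) + H z - Real.log K := by
      rw [hQ, Real.log_div (by have := hT z hz; positivity) hK.ne',
        Real.log_mul (hT z hz).ne' (Real.exp_pos _).ne', Real.log_exp]
    have hsq : √(P z) ^ 2 = P z := Real.sq_sqrt (hP z hz)
    have hsq' : √Q ^ 2 = Q := Real.sq_sqrt hQ0.le
    rcases (hP z hz).eq_or_lt with h0 | h0
    · rw [← h0]; simp [hsq']
    · have hs : 0 < √(P z) := Real.sqrt_pos.2 h0
      have hs' : 0 < √Q := Real.sqrt_pos.2 hQ0
      have h1 := Real.log_le_sub_one_of_pos (div_pos hs' hs)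
      rw [Real.log_div hs'.ne' hs.ne', Real.log_sqrt hQ0.le, Real.log_sqrt h0.le] at h1
      have h2 := mul_le_mul_of_nonneg_left h1 h0.le
      have h3 : P z * (√Q / √(P z) - 1) = √(P z) * √Q - P z := by
        nth_rewrite 1 [← hsq]
        field_simp
        rw [mul_sub, ← sq, hsq]
      rw [h3, hlQ] at h2
      nlinarith
  refine (sum_le_sum hpt).trans (le_of_eq ?_)
  simp only [sum_add_distrib, sum_sub_distrib, ← mul_sum, ← sum_div, hP1, hKs, div_self hK.ne']
  ring

/-- On the exceptional set `P` and the tilt differ by a constant factor, so this set is charged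
against the Hellinger distance, under both `P` and `T`. -/
lemma bad_le {ι : Type*} (s : Finset ι) (P T H : ι → ℝ) (μ e ε : ℝ) (hε : 0 < ε)
    (he : e ≤ ε / 2) (hP : ∀ z ∈ s, 0 ≤ P z) (hT : ∀ z ∈ s, 0 < T z)
    (hP1 : ∑ z ∈ s, P z = 1) (hs : s.Nonempty)
    (hD : ∑ z ∈ s, P z * (Real.log (P z) - Real.log (T z)) - ∑ z ∈ s, P z * H z ≤ -μ + e)
    (hK : Real.log (∑ z ∈ s, T z * Real.exp (H z)) ≤ μ + e)
    (B : Finset ι) (hBs : B ⊆ s)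
    (hB : ∀ z ∈ B, (μ + ε ≤ H z ∧ P z ≤ T z) ∨ (H z ≤ μ - ε ∧ T z ≤ P z)) :
    ∑ z ∈ B, P z ≤ 2 * e / (1 - Real.exp (-(ε / 4))) ^ 2 ∧
    ∑ z ∈ B, T z ≤ 2 * e / (1 - Real.exp (-(ε / 4))) ^ 2 := by
  set K := ∑ z ∈ s, T z * Real.exp (H z) with hKdef
  have hK0 : 0 < K := sum_pos (fun z hz => mul_pos (hT z hz) (Real.exp_pos _)) hs
  have hel := hellinger_le s P T H K hP hT hP1 hK0 rfl
  have hnn : 0 ≤ ∑ z ∈ s, (√(P z) - √(T z * Real.exp (H z) / K)) ^ 2 :=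
    sum_nonneg fun z _ => sq_nonneg _
  -- nonnegativity of the relative entropy bounds the normalising constant from below
  have hKlow : μ - e ≤ Real.log K := by linarith
  set r := Real.exp (-(ε / 4)) with hr
  have hr1 : r < 1 := by rw [hr, Real.exp_lt_one_iff]; linarith
  have hc : 0 < (1 - r) ^ 2 := pow_pos (by linarith) 2
  have hsqrt : ∀ x : ℝ, √(Real.exp x) = Real.exp (x / 2) := fun x => by
    rw [Real.exp_half]
  have key : ∀ z ∈ B, (1 - r) ^ 2 * max (P z) (T z) ≤
      (√(P z) - √(T z * Real.exp (H z) / K)) ^ 2 := by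
    intro z hz
    have hTz := hT z (hBs hz)
    have hPz := hP z (hBs hz)
    have hQ : T z * Real.exp (H z) / K = T z * Real.exp (H z - Real.log K) := by
      rw [Real.exp_sub, Real.exp_log hK0]; ring
    have hQ' : √(T z * Real.exp (H z) / K) = √(T z) * Real.exp ((H z - Real.log K) / 2) := by
      rw [hQ, Real.sqrt_mul hTz.le, hsqrt]
    rw [hQ']
    rcases hB z hz with ⟨h1, h2⟩ | ⟨h1, h2⟩
    · rw [max_eq_right h2]
      have h3 : Real.exp (ε / 4) ≤ Real.exp ((H z - Real.log K) / 2) :=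
        Real.exp_le_exp.2 (by linarith)
      have h4 : 1 - r ≤ Real.exp (ε / 4) - 1 := by
        have := Real.add_one_le_exp (ε / 4)
        have := Real.add_one_le_exp (-(ε / 4))
        rw [← hr] at this
        linarith
      have h5 : √(P z) ≤ √(T z) := Real.sqrt_le_sqrt h2
      have h6 : (1 - r) * √(T z) ≤ √(T z) * Real.exp ((H z - Real.log K) / 2) - √(P z) := by
        nlinarith [Real.sqrt_nonneg (T z), mul_le_mul_of_nonneg_left
          (h4.trans (sub_le_sub_right h3 1)) (Real.sqrt_nonneg (T z))]
      calc (1 - r) ^ 2 * T z = ((1 - r) * √(T z)) ^ 2 := by rw [mul_pow, Real.sq_sqrt hTz.le]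
        _ ≤ (√(T z) * Real.exp ((H z - Real.log K) / 2) - √(P z)) ^ 2 :=
            pow_le_pow_left₀ (mul_nonneg (by linarith) (Real.sqrt_nonneg _)) h6 2
        _ = _ := by ring
    · rw [max_eq_left h2]
      have h3 : Real.exp ((H z - Real.log K) / 2) ≤ r :=
        Real.exp_le_exp.2 (by linarith)
      have h5 : √(T z) ≤ √(P z) := Real.sqrt_le_sqrt h2
      have h6 : (1 - r) * √(P z) ≤ √(P z) - √(T z) * Real.exp ((H z - Real.log K) / 2) := by
        have := mul_le_mul h5 h3 (Real.exp_pos _).le (Real.sqrt_nonneg _)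
        linarith
      calc (1 - r) ^ 2 * P z = ((1 - r) * √(P z)) ^ 2 := by rw [mul_pow, Real.sq_sqrt hPz]
        _ ≤ _ := pow_le_pow_left₀ (mul_nonneg (by linarith) (Real.sqrt_nonneg _)) h6 2
  have hsum : (1 - r) ^ 2 * ∑ z ∈ B, max (P z) (T z) ≤ 2 * e := by
    rw [mul_sum]
    refine (sum_le_sum key).trans ((sum_le_sum_of_subset_of_nonneg hBs
      fun z _ _ => sq_nonneg _).trans (hel.trans ?_))
    linarith
  have hsum' : ∑ z ∈ B, max (P z) (T z) ≤ 2 * e / (1 - r) ^ 2 := by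
    rw [le_div_iff₀ hc]; linarith
  exact ⟨(sum_le_sum fun z _ => le_max_left _ _).trans hsum',
    (sum_le_sum fun z _ => le_max_right _ _).trans hsum'⟩

lemma probOf_eq {n m : ℕ} (p : (Fin n → ℕ) → ℝ) (hp : ∀ z ∉ confs n m, p z = 0)
    (h1 : ∑ z ∈ confs n m, p z = 1) (G : Set (Fin n → ℕ)) [DecidablePred (· ∈ G)] :
    probOf p G = 1 - ∑ z ∈ (confs n m).filter (· ∉ G), p z := by
  have h2 : probOf p G = ∑ z ∈ (confs n m).filter (· ∈ G), p z := by
    rw [probOf, tsum_eq_sum (s := confs n m), sum_filter]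
    · refine sum_congr rfl fun z _ => ?_
      simp [Set.indicator_apply]
    · intro z hz
      simp [Set.indicator_apply, hp z hz]
  rw [h2, ← h1, ← sum_filter_add_sum_filter_not (confs n m) (· ∈ G)]
  ring

/-- The set of configurations on which the threshold test with statistic `HStat` agrees with the
likelihood comparison. -/
def goodSet (n m : ℕ) (a : Fin n → ℕ) (ε : ℝ) : Set (Fin n → ℕ) :=
  {z | (HStat n m a z ≥ muH n m a + ε → plProb n m a z > stProb n m z) ∧
       (HStat n m a z ≤ muH n m a - ε → stProb n m z > plProb n m a z)}

/-- Quantitative form of the theorem for fixed `n`. -/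
lemma goodSet_bound (n m : ℕ) (hn : 0 < n) (a : Fin n → ℕ) (hk : ∑ i, a i < m) (v d e ε : ℝ)
    (hv : v = ((m : ℝ) - ∑ i, (a i : ℝ)) / n)
    (hd : ∀ i, |(a i : ℝ) - (∑ j, (a j : ℝ)) / n| / ((m : ℝ) / n) ≤ d) (hd1 : d ≤ 1)
    (he : muH n m a * d + (∑ i, (a i : ℝ)) / (2 * v * n)
        + (∑ i, (a i : ℝ) ^ 2) / v ^ 2 + (∑ i, (a i : ℝ)) / (3 * v ^ 2) ≤ e)
    (hε : 0 < ε) (heε : e ≤ ε / 2) :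
    (1 - 2 * e / (1 - Real.exp (-(ε / 4))) ^ 2 ≤ probOf (stProb n m) (goodSet n m a ε) ∧
      probOf (stProb n m) (goodSet n m a ε) ≤ 1) ∧
    (1 - 2 * e / (1 - Real.exp (-(ε / 4))) ^ 2 ≤ probOf (plProb n m a) (goodSet n m a ε) ∧
      probOf (plProb n m a) (goodSet n m a ε) ≤ 1) := by
  classical
  have hn' : (0 : ℝ) < n := by exact_mod_cast hn
  have hv0 : 0 < v := by
    rw [hv]
    have : (∑ i, (a i : ℝ)) < m := by exact_mod_cast hk
    have : 0 < (m : ℝ) - ∑ i, (a i : ℝ) := by linarith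
    positivity
  have hT1 := sum_stProb n m hn
  have hP1 : ∑ z ∈ confs n m, plProb n m a z = 1 := by
    have := sum_plProb n m a hk.le (fun _ => 1)
    simpa [sum_stProb n _ hn] using this
  have hne : (confs n m).Nonempty := by
    by_contra hcon
    rw [not_nonempty_iff_eq_empty] at hcon
    simp [hcon] at hT1
  have hT0 : ∀ z ∉ confs n m, stProb n m z = 0 := fun z hz => by
    rw [stProb, if_neg (by rwa [mem_confs] at hz)]
  have hP0 : ∀ z ∉ confs n m, plProb n m a z = 0 := fun z hz => by
    rw [plProb, if_neg (by rw [mem_confs] at hz; tauto)]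
  have hE := expected_log_ratio_le n m hn a hk v d hv hd hd1
  have hH := expected_HStat n m hn a hk
  have hM := log_mgf_le n m hn (by omega) a d hd hd1
  have h1 : 0 ≤ (∑ i, (a i : ℝ)) / (2 * v * n) := by positivity
  have h2 : 0 ≤ (∑ i, (a i : ℝ) ^ 2) / v ^ 2 := by positivity
  have h3 : 0 ≤ (∑ i, (a i : ℝ)) / (3 * v ^ 2) := by positivity
  obtain ⟨b1, b2⟩ := bad_le (confs n m) (plProb n m a) (stProb n m) (HStat n m a) (muH n m a) e ε
    hε heε (fun z _ => plProb_nonneg n m a z) (fun z hz => stProb_pos hn hz) hP1 hne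
    (by linarith) (by linarith) ((confs n m).filter (· ∉ goodSet n m a ε)) (filter_subset _ _)
    (by
      intro z hz
      have hz := (mem_filter.1 hz).2
      simp only [goodSet, Set.mem_ofPred_eq, not_and_or, Classical.not_imp, not_lt, gt_iff_lt,
        ge_iff_le] at hz
      exact hz)
  rw [probOf_eq _ hT0 hT1, probOf_eq _ hP0 hP1]
  have n1 : 0 ≤ ∑ z ∈ (confs n m).filter (· ∉ goodSet n m a ε), stProb n m z :=
    sum_nonneg fun z hz => (stProb_pos hn (mem_filter.1 hz).1).le
  have n2 : 0 ≤ ∑ z ∈ (confs n m).filter (· ∉ goodSet n m a ε), plProb n m a z :=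
    sum_nonneg fun z _ => plProb_nonneg n m a z
  refine ⟨⟨?_, ?_⟩, ?_, ?_⟩ <;> linarith

/-! ### Asymptotics in the Hilly regime -/

/-- Integrality of the planting enters through `k ≤ Σ a_i² = S + k² / n`. -/
lemma planted_le (n : ℕ) (hn : 0 < n) (a : Fin n → ℕ) (hS : 0 < sqDev n a) :
    (∑ i, (a i : ℝ)) / sqDev n a ^ 2 ≤ (∑ i, (a i : ℝ) ^ 2) / sqDev n a ^ 2 ∧
    (∑ i, (a i : ℝ) ^ 2) / sqDev n a ^ 2 =
      1 / sqDev n a + ((∑ i, (a i : ℝ)) / (√n * sqDev n a)) ^ 2 := by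
  have hn' : (0 : ℝ) < n := by exact_mod_cast hn
  have hle : ∑ i, (a i : ℝ) ≤ ∑ i, (a i : ℝ) ^ 2 := sum_le_sum fun i _ => by
    exact_mod_cast Nat.le_self_pow (by norm_num) _
  have hSe := sqDev_eq n hn a
  set k := ∑ i, (a i : ℝ)
  set S := sqDev n a
  refine ⟨by gcongr, ?_⟩
  have e1 : (k / (√n * S)) ^ 2 = k ^ 2 / n / S ^ 2 := by
    rw [div_pow, mul_pow, Real.sq_sqrt hn'.le]; field_simp
  have e2 : ∑ i, (a i : ℝ) ^ 2 = S + k ^ 2 / n := by linarith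
  rw [e1, e2]
  field_simp

/-- The error terms of `goodSet_bound` in terms of `S` and `r = k / (√n S)`. -/
lemma error_le (n m : ℕ) (hn : 0 < n) (a : Fin n → ℕ) (c r v : ℝ) (hc : 0 < c)
    (hS : 0 < sqDev n a) (hr : r = (∑ i, (a i : ℝ)) / (√n * sqDev n a))
    (hl : c / 2 * sqDev n a ≤ (m : ℝ) / n) (hrc : r ≤ c / 4)
    (hv : v = ((m : ℝ) - ∑ i, (a i : ℝ)) / n) :
    ∑ i, a i < m ∧
    muH n m a * (√(sqDev n a) / ((m : ℝ) / n)) + (∑ i, (a i : ℝ)) / (2 * v * n)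
        + (∑ i, (a i : ℝ) ^ 2) / v ^ 2 + (∑ i, (a i : ℝ)) / (3 * v ^ 2) ≤
      2 / c ^ 2 * (√(sqDev n a))⁻¹ + 2 / c * r
        + 32 / c ^ 2 * ((sqDev n a)⁻¹ + r ^ 2) := by
  have hn' : (0 : ℝ) < n := by exact_mod_cast hn
  have hn1 : (1 : ℝ) ≤ n := by exact_mod_cast hn
  have hk0 : 0 ≤ ∑ i, (a i : ℝ) := by positivity
  obtain ⟨p1, p2⟩ := planted_le n hn a hS
  have hmu := muH_eq n m hn a
  rw [← hr] at p2
  have hcast : ((∑ i, a i : ℕ) : ℝ) = ∑ i, (a i : ℝ) := by push_cast; rfl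
  have hq0 : 0 ≤ ∑ i, (a i : ℝ) ^ 2 := by positivity
  rw [hmu]
  set k := ∑ i, (a i : ℝ)
  set q := ∑ i, (a i : ℝ) ^ 2
  set S := sqDev n a
  set l : ℝ := (m : ℝ) / n with hldef
  have hl0 : 0 < l := lt_of_lt_of_le (by positivity) hl
  have hs1 : 1 ≤ √(n : ℝ) := Real.one_le_sqrt.2 hn1
  have hr0 : 0 ≤ r := by rw [hr]; positivity
  -- the planted share per bin is at most `r S`
  have hkn : k / n ≤ r * S := by
    rw [hr, div_le_iff₀ hn']
    have : k / (√n * S) * S * n = k * √n := by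
      nth_rewrite 2 [← Real.mul_self_sqrt hn'.le]
      field_simp
    rw [this]
    nlinarith
  have hv2 : v = l - k / n := by rw [hv, hldef]; ring
  have hvS : c / 4 * S ≤ v := by
    have : r * S ≤ c / 4 * S := by gcongr
    rw [hv2]
    linarith
  have hv0 : 0 < v := lt_of_lt_of_le (by positivity) hvS
  refine ⟨?_, ?_⟩
  · have : 0 < (m : ℝ) - k := by
      have h := mul_pos hv0 hn'
      rw [hv] at h
      field_simp at h
      exact h
    have : ((∑ i, a i : ℕ) : ℝ) < m := by rw [hcast]; linarith
    exact_mod_cast this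
  · have t1 : S / (2 * l) * (√S / l) ≤ 2 / c ^ 2 * (√S)⁻¹ := by
      calc S / (2 * l) * (√S / l) ≤ S / (2 * (c / 2 * S)) * (√S / (c / 2 * S)) := by gcongr
        _ = 2 / c ^ 2 * (√S / S) := by field_simp
        _ = 2 / c ^ 2 * (√S)⁻¹ := by rw [Real.sqrt_div_self']; ring
    have t2 : k / (2 * v * n) ≤ 2 / c * r := by
      calc k / (2 * v * n) = k / n / (2 * v) := by field_simp
        _ ≤ r * S / (2 * (c / 4 * S)) := by gcongr
        _ = 2 / c * r := by field_simp; norm_num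
    have t3 : q / v ^ 2 ≤ 16 / c ^ 2 * (S⁻¹ + r ^ 2) := by
      calc q / v ^ 2 ≤ q / (c / 4 * S) ^ 2 := by gcongr
        _ = 16 / c ^ 2 * (q / S ^ 2) := by field_simp; norm_num
        _ = 16 / c ^ 2 * (S⁻¹ + r ^ 2) := by rw [p2, one_div]
    have t4 : k / (3 * v ^ 2) ≤ 16 / c ^ 2 * (S⁻¹ + r ^ 2) := by
      calc k / (3 * v ^ 2) ≤ k / (1 * v ^ 2) := by gcongr; norm_num
        _ ≤ k / (1 * (c / 4 * S) ^ 2) := by gcongr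
        _ = 16 / c ^ 2 * (k / S ^ 2) := by field_simp; norm_num
        _ ≤ 16 / c ^ 2 * (q / S ^ 2) := by gcongr
        _ = 16 / c ^ 2 * (S⁻¹ + r ^ 2) := by rw [p2, one_div]
    have : 32 / c ^ 2 * (S⁻¹ + r ^ 2) =
        16 / c ^ 2 * (S⁻¹ + r ^ 2) + 16 / c ^ 2 * (S⁻¹ + r ^ 2) := by ring
    linarith

/-- Hilly regime: whp under both ST and PL, the threshold strategy
based on `H_A` agrees with the optimal likelihood comparison. -/
theorem hilly_regime_optimal (A : (n : ℕ) → Fin n → ℕ) (m k : ℕ → ℕ)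
    (hka : ∀ n, ∑ i, A n i = k n) (hkm : ∀ n, k n ≤ m n)
    (hk : Tendsto (fun n : ℕ => (k n : ℝ) / Real.sqrt n) atTop atTop)
    (c : ℝ) (hc : 0 < c) (hreg : HillyRegime A m k c)
    (ε : ℝ) (hε : 0 < ε) :
    Tendsto (fun n : ℕ => probOf (stProb n (m n))
        {z | (HStat n (m n) (A n) z ≥ muH n (m n) (A n) + ε →
                plProb n (m n) (A n) z > stProb n (m n) z) ∧
             (HStat n (m n) (A n) z ≤ muH n (m n) (A n) - ε →
                stProb n (m n) z > plProb n (m n) (A n) z)})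
      atTop (𝓝 1) ∧
    Tendsto (fun n : ℕ => probOf (plProb n (m n) (A n))
        {z | (HStat n (m n) (A n) z ≥ muH n (m n) (A n) + ε →
                plProb n (m n) (A n) z > stProb n (m n) z) ∧
             (HStat n (m n) (A n) z ≤ muH n (m n) (A n) - ε →
                stProb n (m n) z > plProb n (m n) (A n) z)})
      atTop (𝓝 1) := by
  obtain ⟨hX, hL⟩ := hreg
  have hn0 : ∀ᶠ n : ℕ in atTop, 0 < n := eventually_gt_atTop 0
  have hk0 : ∀ᶠ n : ℕ in atTop, 0 < (k n : ℝ) := by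
    filter_upwards [hk.eventually_gt_atTop 0] with n h
    by_contra hcon
    have : (k n : ℝ) = 0 := le_antisymm (not_lt.1 hcon) (Nat.cast_nonneg _)
    simp [this] at h
  have hkr : ∀ n, ∑ i, (A n i : ℝ) = k n := fun n => by rw [← hka n]; push_cast; rfl
  -- the first regime hypothesis is `√n S / k → ∞`
  have hXe : (fun n : ℕ => (n : ℝ) ^ ((3 : ℝ) / 2) * plantV n (A n) / (k n : ℝ)) =ᶠ[atTop]
      fun n : ℕ => √n * sqDev n (A n) / k n := by
    filter_upwards [hn0] with n hn
    have hn' : (0 : ℝ) < n := by exact_mod_cast hn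
    have : (n : ℝ) ^ ((3 : ℝ) / 2) = √n * n := by
      rw [Real.sqrt_eq_rpow, ← Real.rpow_add_one hn'.ne']
      norm_num
    rw [sqDev_eq_plantV n hn, this]
    ring
  have hX' := hX.congr' hXe
  let r : ℕ → ℝ := fun n => (∑ i, (A n i : ℝ)) / (√n * sqDev n (A n))
  have hr : Tendsto r atTop (𝓝 0) := by
    refine (tendsto_inv_atTop_zero.comp hX').congr fun n => ?_
    simp [r, hkr]
  have hS : Tendsto (fun n => sqDev n (A n)) atTop atTop := by
    refine (hX'.atTop_mul_atTop₀ hk).congr' ?_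
    filter_upwards [hn0, hk0] with n hn hkn
    have hn' : 0 < √(n : ℝ) := Real.sqrt_pos.2 (by exact_mod_cast hn)
    field_simp
  have hL' : Tendsto (fun n => ((m n : ℝ) / n) / sqDev n (A n)) atTop (𝓝 c) := by
    refine hL.congr' ?_
    filter_upwards [hn0] with n hn
    have hn' : (n : ℝ) ≠ 0 := by exact_mod_cast hn.ne'
    rw [sqDev_eq_plantV n hn, div_div]
    congr 1
    ring
  let E : ℕ → ℝ := fun n => 2 / c ^ 2 * (√(sqDev n (A n)))⁻¹ + 2 / c * r n
        + 32 / c ^ 2 * ((sqDev n (A n))⁻¹ + r n ^ 2)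
  have hSinv : Tendsto (fun n => (sqDev n (A n))⁻¹) atTop (𝓝 0) :=
    tendsto_inv_atTop_zero.comp hS
  have hSsq : Tendsto (fun n => (√(sqDev n (A n)))⁻¹) atTop (𝓝 0) :=
    tendsto_inv_atTop_zero.comp (Real.tendsto_sqrt_atTop.comp hS)
  have hE : Tendsto E atTop (𝓝 0) := by
    have := ((hSsq.const_mul (2 / c ^ 2)).add (hr.const_mul (2 / c))).add
      ((hSinv.add (hr.pow 2)).const_mul (32 / c ^ 2))
    simpa using this
  have hev : ∀ᶠ n : ℕ in atTop,
      (1 - 2 * E n / (1 - Real.exp (-(ε / 4))) ^ 2 ≤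
          probOf (stProb n (m n)) (goodSet n (m n) (A n) ε) ∧
        probOf (stProb n (m n)) (goodSet n (m n) (A n) ε) ≤ 1) ∧
      (1 - 2 * E n / (1 - Real.exp (-(ε / 4))) ^ 2 ≤
          probOf (plProb n (m n) (A n)) (goodSet n (m n) (A n) ε) ∧
        probOf (plProb n (m n) (A n)) (goodSet n (m n) (A n) ε) ≤ 1) := by
    filter_upwards [hn0, hS.eventually_gt_atTop 0, hL'.eventually_const_lt (half_lt_self hc),
      hr.eventually_lt_const (by positivity : 0 < c / 4),
      hSsq.eventually_lt_const (by positivity : 0 < c / 2),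
      hE.eventually_lt_const (half_pos hε)] with n hn hSn hLn hrn hsn hEn
    have hl : c / 2 * sqDev n (A n) ≤ (m n : ℝ) / n := by
      rw [lt_div_iff₀ hSn] at hLn
      exact hLn.le
    have hl0 : 0 < (m n : ℝ) / n := lt_of_lt_of_le (by positivity) hl
    obtain ⟨hkm', herr⟩ := error_le n (m n) hn (A n) c (r n) _ hc hSn rfl hl hrn.le rfl
    refine goodSet_bound n (m n) hn (A n) hkm' _ (√(sqDev n (A n)) / ((m n : ℝ) / n)) (E n) ε rfl
      ?_ ?_ herr hε hEn.le
    · intro i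
      gcongr
      refine Real.abs_le_sqrt ?_
      exact single_le_sum (f := fun i => ((A n i : ℝ) - (∑ j, (A n j : ℝ)) / n) ^ 2)
        (fun i _ => sq_nonneg _) (mem_univ i)
    · rw [div_le_one hl0]
      have hs0 : 0 < √(sqDev n (A n)) := Real.sqrt_pos.2 hSn
      have h1 : 1 ≤ c / 2 * √(sqDev n (A n)) := by
        rw [inv_lt_iff_one_lt_mul₀ hs0] at hsn
        linarith
      have h2 := Real.mul_self_sqrt hSn.le
      nlinarith
  have hlow : Tendsto (fun n => 1 - 2 * E n / (1 - Real.exp (-(ε / 4))) ^ 2) atTop (𝓝 1) := by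
    have := ((hE.const_mul 2).div_const ((1 - Real.exp (-(ε / 4))) ^ 2)).const_sub 1
    simpa using this
  constructor
  · exact tendsto_of_tendsto_of_tendsto_of_le_of_le' hlow tendsto_const_nhds
      (hev.mono fun n h => h.1.1) (hev.mono fun n h => h.1.2)
  · exact tendsto_of_tendsto_of_tendsto_of_le_of_le' hlow tendsto_const_nhds
      (hev.mono fun n h => h.2.1) (hev.mono fun n h => h.2.2)
end

section
/- In the Hilly regime (n^{3/2}V(A(n))/k(n) → ∞ and m(n)/(V(A(n))·n²) → c for a fixed constant c > 0, with k(n)/√n → ∞), under the planted distribution PL_A(m,n) the normalized statistic (H_A(Z) − V(A)n²/m)/√((m−k)V(A)n²/m²) converges in distribution to the standard normal distribution N(0,1) as n → ∞. -/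
/-!
Under the planted distribution `z = a + y` with `y` multinomial with `N = m - k` trials, and the
normalized statistic equals `∑ i, y i * x i` with `x i = (a i - k / n) / √(N V)`
(`normalized_HStat_eq`). It is thus a sum of `N` independent uniform draws from the values `x i`,
which have mean `0` and mean square `1 / N`.

Since `∑ i, (a i - k / n)² = n V`, every value satisfies `|x i| ≤ δ := √(n / N)`. In the Hilly
regime `k / m → 0` and `m / n ~ c V n → ∞`, because `V n = (n^{3/2} V / k) (k / √n)`; hence
`δ → 0`, and the central limit theorem for uniformly small rows applies.

That theorem is proved through characteristic functions. By the multinomial theorem the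
characteristic function of the statistic is the `N`-th power of that of one draw
(`charFun_multLaw`), and a second-order Taylor expansion bounds its distance to `exp (-t² / 2)` by
a quantity vanishing with `δ` (`norm_charFun_sub_le`). Lévy's continuity theorem and the
portmanteau theorem then give convergence of the distribution functions (`tendsto_multLaw_Iic`).
-/

open Finset Filter Topology

open MeasureTheory ProbabilityTheory

/-! ### The multinomial law of a linear statistic -/

/-- The law on `ℝ` of `∑ i, y i * x i`, where `y` is multinomial with `N` trials and `n` equally
likely outcomes, written as a finite combination of Dirac masses. For `n = 0 < N` it is the zero
measure. -/
noncomputable def multLaw (n N : ℕ) (x : Fin n → ℝ) : Measure ℝ :=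
  ∑ y ∈ piAntidiag (univ : Finset (Fin n)) N,
    ENNReal.ofReal ((Nat.multinomial univ y : ℝ) * (n : ℝ)⁻¹ ^ N) •
      Measure.dirac (∑ i, (y i : ℝ) * x i)

lemma multLaw_isProbabilityMeasure {n : ℕ} (hn : 0 < n) (N : ℕ) (x : Fin n → ℝ) :
    IsProbabilityMeasure (multLaw n N x) := by
  constructor
  have hn' : (n : ℝ) ≠ 0 := by positivity
  have h := Finset.sum_pow_eq_sum_piAntidiag (univ : Finset (Fin n)) (fun _ => (1 : ℝ)) N
  simp only [sum_const, card_univ, Fintype.card_fin, nsmul_eq_mul, mul_one, one_pow,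
    prod_const_one] at h
  simp only [multLaw, Measure.coe_finsetSum, Finset.sum_apply, Measure.smul_apply,
    measure_univ, smul_eq_mul, mul_one]
  rw [← ENNReal.ofReal_sum_of_nonneg (fun _ _ => by positivity), ← Finset.sum_mul, ← h, inv_pow,
    mul_inv_cancel₀ (by positivity), ENNReal.ofReal_one]

lemma multLaw_real_apply (n N : ℕ) (x : Fin n → ℝ) {s : Set ℝ} (hs : MeasurableSet s) :
    (multLaw n N x).real s = ∑ y ∈ piAntidiag (univ : Finset (Fin n)) N,
      ((Nat.multinomial univ y : ℝ) * (n : ℝ)⁻¹ ^ N) *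
        s.indicator 1 (∑ i, (y i : ℝ) * x i) := by
  simp only [multLaw, Measure.real, Measure.coe_finsetSum, Finset.sum_apply, Measure.smul_apply,
    smul_eq_mul, Measure.dirac_apply' _ hs]
  rw [ENNReal.toReal_sum]
  · refine Finset.sum_congr rfl fun y _ => ?_
    rw [ENNReal.toReal_mul, ENNReal.toReal_ofReal (by positivity)]
    by_cases h : (∑ i, (y i : ℝ) * x i) ∈ s <;> simp [h]
  · intro y _
    refine ENNReal.mul_ne_top ENNReal.ofReal_ne_top ?_
    by_cases h : (∑ i, (y i : ℝ) * x i) ∈ s <;> simp [h]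

/-- By the multinomial theorem, the characteristic function is the `N`-th power of that of a
single trial: `∑ i, y i * x i` is distributed as a sum of `N` independent uniform draws from the
values `x i`. -/
lemma charFun_multLaw (n N : ℕ) (x : Fin n → ℝ) (t : ℝ) :
    charFun (multLaw n N x) t =
      ((n : ℂ)⁻¹ * ∑ i, Complex.exp ((t * x i : ℝ) * Complex.I)) ^ N := by
  rw [charFun_apply_real, multLaw, integral_finsetSum_measure]
  · simp only [integral_smul_measure, integral_dirac]
    rw [mul_pow, Finset.sum_pow_eq_sum_piAntidiag, Finset.mul_sum]
    refine Finset.sum_congr rfl fun y _ => ?_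
    rw [ENNReal.toReal_ofReal (by positivity), Complex.real_smul]
    simp only [← Complex.exp_nat_mul, ← Complex.exp_sum]
    push_cast
    rw [mul_left_comm, ← mul_assoc]
    congr 2
    rw [Finset.mul_sum, Finset.sum_mul]
    exact Finset.sum_congr rfl fun i _ => by ring
  · intro y _
    refine Integrable.smul_measure ?_ ENNReal.ofReal_ne_top
    exact integrable_dirac (by simp)

/-! ### Central limit theorem for bounded rows -/

lemma norm_pow_sub_pow_le_nat_mul {w z : ℂ} (hw : ‖w‖ ≤ 1) (hz : ‖z‖ ≤ 1) (N : ℕ) :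
    ‖w ^ N - z ^ N‖ ≤ N * ‖w - z‖ := by
  induction N with
  | zero => simp
  | succ N ih =>
    have : w ^ (N + 1) - z ^ (N + 1) = w ^ N * (w - z) + (w ^ N - z ^ N) * z := by ring
    rw [this]
    refine (norm_add_le _ _).trans ?_
    rw [norm_mul, norm_mul, norm_pow]
    push_cast
    have h1 := mul_le_of_le_one_left (norm_nonneg (w - z)) (pow_le_one₀ (norm_nonneg w) hw (n := N))
    have h2 := mul_le_of_le_one_right (norm_nonneg (w ^ N - z ^ N)) hz
    linarith

/-- Quantitative convergence of characteristic functions. If the values `x i` have mean `0`, mean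
square `1 / N` and absolute value at most `δ`, the one-trial characteristic function differs from
`exp (-t² / (2N))` by `O(δ / N)`; taking `N`-th powers in the unit disc costs a factor `N`. -/
lemma norm_charFun_sub_le {n N : ℕ} (hn : 0 < n) (hN : 0 < N) (x : Fin n → ℝ) (t δ : ℝ)
    (hδ : 0 ≤ δ) (h0 : ∑ i, x i = 0) (h2 : ∑ i, x i ^ 2 = n / N) (hx : ∀ i, |x i| ≤ δ)
    (hNδ : (N : ℝ)⁻¹ ≤ δ ^ 2) :
    ‖((n : ℂ)⁻¹ * ∑ i, Complex.exp ((t * x i : ℝ) * Complex.I)) ^ N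
        - Complex.exp (-t ^ 2 / 2 : ℝ)‖ ≤
      |t| ^ 3 * δ * Real.exp (|t| * δ) + (t ^ 2 / 2) ^ 2 * δ ^ 2 * Real.exp (t ^ 2 / 2 * δ ^ 2) := by
  have hn' : (0 : ℝ) < n := by positivity
  have hN' : (0 : ℝ) < N := by positivity
  set w : ℂ := (n : ℂ)⁻¹ * ∑ i, Complex.exp ((t * x i : ℝ) * Complex.I) with hw
  set s : ℝ := t ^ 2 / 2 * (N : ℝ)⁻¹ with hs
  have hs0 : 0 ≤ s := by positivity
  have hzN : Complex.exp (-t ^ 2 / 2 : ℝ) = Complex.exp (-s : ℝ) ^ N := by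
    rw [← Complex.exp_nat_mul, ← Complex.ofReal_natCast, ← Complex.ofReal_mul]
    congr 2
    rw [hs]; field_simp
  have hw1 : ‖w‖ ≤ 1 := by
    rw [hw, norm_mul, norm_inv, Complex.norm_natCast]
    have : ‖∑ i, Complex.exp ((t * x i : ℝ) * Complex.I)‖ ≤ n := by
      refine (norm_sum_le _ _).trans ?_
      simp only [Complex.norm_exp_ofReal_mul_I]
      simp
    calc _ ≤ (n : ℝ)⁻¹ * n := by gcongr
      _ = 1 := by field_simp
  have hz1 : ‖Complex.exp (-s : ℝ)‖ ≤ 1 := by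
    rw [Complex.norm_exp_ofReal]; exact Real.exp_le_one_iff.2 (by linarith)
  -- The second-order Taylor remainder at `t * x i` is `O(|x i| ^ 3) = O(δ * x i ^ 2)`; the zeroth,
  -- first and second order terms average to `1`, `0` and `-s`.
  have hA : ‖w - (1 - s : ℝ)‖ ≤ |t| ^ 3 * δ * Real.exp (|t| * δ) * (N : ℝ)⁻¹ := by
    have hsum : ∑ i, (Complex.exp ((t * x i : ℝ) * Complex.I)
        - ∑ j ∈ range 3, ((t * x i : ℝ) * Complex.I) ^ j / (j.factorial : ℂ))
        = n * (w - (1 - s : ℝ)) := by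
      have e0 : (∑ i, (x i : ℂ)) = 0 := by exact_mod_cast h0
      have e2 : (∑ i, (x i : ℂ) ^ 2) = n / N := by
        rw [← Complex.ofReal_natCast, ← Complex.ofReal_natCast, ← Complex.ofReal_div, ← h2]
        push_cast; rfl
      have e3 : ∀ i, ∑ j ∈ range 3, ((t * x i : ℝ) * Complex.I) ^ j / (j.factorial : ℂ)
          = 1 + (t * Complex.I) * x i - (t ^ 2 / 2) * (x i : ℂ) ^ 2 := by
        intro i
        simp only [Finset.sum_range_succ, Finset.sum_range_zero, mul_pow, Complex.I_sq]
        simp [Nat.factorial]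
        ring
      have hnC : (n : ℂ) ≠ 0 := by exact_mod_cast hn.ne'
      simp only [e3]
      rw [Finset.sum_sub_distrib, Finset.sum_sub_distrib, Finset.sum_add_distrib,
        ← Finset.mul_sum, ← Finset.mul_sum, e0, e2, hw, hs]
      push_cast
      rw [mul_sub, mul_inv_cancel_left₀ hnC]
      simp
      ring
    have hbd : ‖∑ i, (Complex.exp ((t * x i : ℝ) * Complex.I)
        - ∑ j ∈ range 3, ((t * x i : ℝ) * Complex.I) ^ j / (j.factorial : ℂ))‖
        ≤ ∑ i, |t| ^ 3 * δ * Real.exp (|t| * δ) * x i ^ 2 := by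
      refine (norm_sum_le _ _).trans (Finset.sum_le_sum fun i _ => ?_)
      refine (Complex.norm_exp_sub_sum_le_norm_mul_exp _ 3).trans ?_
      have : ‖((t * x i : ℝ) : ℂ) * Complex.I‖ = |t| * |x i| := by
        rw [norm_mul, Complex.norm_I, mul_one, Complex.norm_real, Real.norm_eq_abs, abs_mul]
      rw [this]
      have h3 : (|t| * |x i|) ^ 3 ≤ |t| ^ 3 * δ * x i ^ 2 := by
        rw [← sq_abs (x i)]
        have := mul_le_mul_of_nonneg_left (hx i) (by positivity : 0 ≤ |t| ^ 3 * |x i| ^ 2)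
        nlinarith
      calc _ ≤ (|t| ^ 3 * δ * x i ^ 2) * Real.exp (|t| * δ) := by
            gcongr; exact hx i
        _ = _ := by ring
    rw [hsum, norm_mul, Complex.norm_natCast, ← Finset.mul_sum, h2] at hbd
    refine le_of_mul_le_mul_left (hbd.trans_eq ?_) hn'
    field_simp
  have hB : ‖Complex.exp (-s : ℝ) - (1 - s : ℝ)‖ ≤ s ^ 2 * Real.exp s := by
    have := Complex.norm_exp_sub_sum_le_norm_mul_exp ((-s : ℝ) : ℂ) 2
    rw [Complex.norm_real, Real.norm_eq_abs, abs_neg, abs_of_nonneg hs0] at this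
    convert this using 2
    simp [Finset.sum_range_succ]
    ring
  rw [hzN]
  refine (norm_pow_sub_pow_le_nat_mul hw1 hz1 N).trans ?_
  have hs' : s ≤ t ^ 2 / 2 * δ ^ 2 := by rw [hs]; gcongr
  have hB' : (N : ℝ) * (s ^ 2 * Real.exp s) ≤
      (t ^ 2 / 2) ^ 2 * δ ^ 2 * Real.exp (t ^ 2 / 2 * δ ^ 2) := by
    have : (N : ℝ) * s ^ 2 = (t ^ 2 / 2) ^ 2 * (N : ℝ)⁻¹ := by rw [hs]; field_simp
    rw [← mul_assoc, this]
    gcongr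
  have hA' : (N : ℝ) * (|t| ^ 3 * δ * Real.exp (|t| * δ) * (N : ℝ)⁻¹)
      = |t| ^ 3 * δ * Real.exp (|t| * δ) := by field_simp
  calc (N : ℝ) * ‖w - Complex.exp (-s : ℝ)‖
      ≤ N * (‖w - (1 - s : ℝ)‖ + ‖Complex.exp (-s : ℝ) - (1 - s : ℝ)‖) := by
        gcongr
        exact (norm_sub_le_norm_sub_add_norm_sub _ ((1 - s : ℝ) : ℂ) _).trans_eq
          (by rw [norm_sub_rev (Complex.exp _)])
    _ ≤ N * (|t| ^ 3 * δ * Real.exp (|t| * δ) * (N : ℝ)⁻¹ + s ^ 2 * Real.exp s) := by gcongr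
    _ ≤ _ := by rw [mul_add, hA']; gcongr

lemma stdNormalCDF_eq (x : ℝ) : stdNormalCDF x = (gaussianReal 0 1).real (Set.Iic x) := by
  rw [Measure.real, gaussianReal_apply_eq_integral _ one_ne_zero, ENNReal.toReal_ofReal
    (integral_nonneg fun _ => gaussianPDFReal_nonneg _ _ _), stdNormalCDF]
  refine integral_congr_ae (ae_of_all _ fun t => ?_)
  simp [gaussianPDFReal]
  ring

/-- Central limit theorem for triangular arrays of uniform draws: it suffices that the bound `δ n`
on the values in row `n` tends to `0`. -/
lemma tendsto_multLaw_Iic (N : ℕ → ℕ) (x : (n : ℕ) → Fin n → ℝ) (δ : ℕ → ℝ)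
    (hδ : Tendsto δ atTop (𝓝 0))
    (h : ∀ᶠ n in atTop, 0 < N n ∧ 0 ≤ δ n ∧ ∑ i, x n i = 0 ∧ ∑ i, x n i ^ 2 = n / N n ∧
      (∀ i, |x n i| ≤ δ n) ∧ (N n : ℝ)⁻¹ ≤ δ n ^ 2) (u : ℝ) :
    Tendsto (fun n => (multLaw n (N n) (x n)).real (Set.Iic u)) atTop (𝓝 (stdNormalCDF u)) := by
  classical
  -- For `n = 0` the multinomial law need not have mass one, so a Dirac mass replaces it.
  let P : ℕ → ProbabilityMeasure ℝ := fun n =>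
    if hn : 0 < n then ⟨multLaw n (N n) (x n), multLaw_isProbabilityMeasure hn _ _⟩
    else ⟨Measure.dirac 0, inferInstance⟩
  have hP : ∀ n, 0 < n → (P n : Measure ℝ) = multLaw n (N n) (x n) := by
    intro n hn; simp [P, hn]
  let G : ProbabilityMeasure ℝ := ⟨gaussianReal 0 1, inferInstance⟩
  have hPG : Tendsto P atTop (𝓝 G) := by
    refine ProbabilityMeasure.tendsto_iff_tendsto_charFun.2 fun t => ?_
    have hG : charFun (G : Measure ℝ) t = Complex.exp (-t ^ 2 / 2 : ℝ) := by
      change charFun (gaussianReal 0 1) t = _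
      rw [charFun_gaussianReal]
      congr 1
      push_cast
      simp
      ring
    rw [hG, tendsto_iff_norm_sub_tendsto_zero]
    have hb : Tendsto (fun n => |t| ^ 3 * δ n * Real.exp (|t| * δ n) +
        (t ^ 2 / 2) ^ 2 * δ n ^ 2 * Real.exp (t ^ 2 / 2 * δ n ^ 2)) atTop (𝓝 0) := by
      have hc : Continuous fun d : ℝ => |t| ^ 3 * d * Real.exp (|t| * d) +
        (t ^ 2 / 2) ^ 2 * d ^ 2 * Real.exp (t ^ 2 / 2 * d ^ 2) := by fun_prop
      simpa [Function.comp_def] using (hc.tendsto 0).comp hδ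
    refine squeeze_zero' (Eventually.of_forall fun _ => norm_nonneg _) ?_ hb
    filter_upwards [h, eventually_gt_atTop 0] with n ⟨h1, h2, h3, h4, h5, h6⟩ hn
    rw [hP n hn, charFun_multLaw]
    exact norm_charFun_sub_le hn h1 (x n) t (δ n) h2 h3 h4 h5 h6
  have hfr : (G : Measure ℝ) (frontier (Set.Iic u)) = 0 := by
    change gaussianReal 0 1 _ = 0
    have := nullSingletonClass_gaussianReal (μ := 0) (v := 1) one_ne_zero
    rw [frontier_Iic]
    exact measure_singleton _
  have := ProbabilityMeasure.tendsto_measure_of_null_frontier_of_tendsto' hPG hfr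
  rw [stdNormalCDF_eq]
  refine ((ENNReal.tendsto_toReal (measure_ne_top _ _)).comp this).congr' ?_
  filter_upwards [eventually_gt_atTop 0] with n hn
  simp only [Function.comp, hP n hn, Measure.real]

/-! ### Reduction of the planted distribution to the multinomial law -/

/-- If `T (y + a)` is the linear form `∑ i, y i * x i` in the unplanted balls `y`, then the law of
`T` under the planted distribution is `multLaw`. -/
lemma probOf_plProb_eq (n m : ℕ) (a : Fin n → ℕ) (ha : ∑ i, a i ≤ m) (T : (Fin n → ℕ) → ℝ)
    (x : Fin n → ℝ) (u : ℝ)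
    (hT : ∀ y : Fin n → ℕ, ∑ i, y i = m - ∑ i, a i → T (y + a) = ∑ i, (y i : ℝ) * x i) :
    probOf (plProb n m a) {z | T z ≤ u} = (multLaw n (m - ∑ i, a i) x).real (Set.Iic u) := by
  classical
  rw [multLaw_real_apply _ _ _ measurableSet_Iic, probOf]
  rw [tsum_eq_sum (s := (piAntidiag (univ : Finset (Fin n)) (m - ∑ i, a i)).map
    (addRightEmbedding a))]
  · rw [Finset.sum_map]
    refine Finset.sum_congr rfl fun y hy => ?_
    have hy' : ∑ i, y i = m - ∑ i, a i := by simpa using hy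
    have hp : plProb n m a (y + a) =
        (Nat.multinomial univ y : ℝ) * (n : ℝ)⁻¹ ^ (m - ∑ i, a i) := by
      have hs : ∑ i, (y + a) i = m := by
        simp only [Pi.add_apply, Finset.sum_add_distrib]; omega
      rw [plProb, if_pos ⟨hs, fun i => by simp⟩]
      congr 1
      have := Nat.multinomial_spec (univ : Finset (Fin n)) y
      rw [hy'] at this
      rw [← this]
      have hne : (∏ i, ((y i).factorial : ℝ)) ≠ 0 :=
        Finset.prod_ne_zero_iff.2 fun i _ => by positivity
      simp only [Pi.add_apply, Nat.add_sub_cancel]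
      push_cast
      field_simp
    simp only [addRightEmbedding_apply]
    by_cases hu : T (y + a) ≤ u
    · have hu' := hu
      rw [hT y hy'] at hu'
      rw [Set.indicator_of_mem (by exact hu), Set.indicator_of_mem (by exact hu'), hp]
      simp
    · have hu' := hu
      rw [hT y hy'] at hu'
      rw [Set.indicator_of_notMem (by exact hu), Set.indicator_of_notMem (by exact hu')]
      simp
  · intro z hz
    refine Set.indicator_apply_eq_zero.2 fun _ => if_neg ?_
    rintro ⟨h1, h2⟩
    refine hz (Finset.mem_map.2 ⟨z - a, ?_, ?_⟩)
    · simp only [mem_piAntidiag, mem_univ, implies_true, and_true, Pi.sub_apply]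
      rw [Finset.sum_tsub_distrib _ (fun i _ => h2 i), h1]
    · ext i
      simp [Nat.sub_add_cancel (h2 i)]

lemma sum_sub_mean_sq {n : ℕ} (hn : 0 < n) (a : Fin n → ℕ) (k : ℝ) (hk : ∑ i, (a i : ℝ) = k) :
    ∑ i, ((a i : ℝ) - k / n) ^ 2 = n * plantV n a := by
  have hn' : (n : ℝ) ≠ 0 := by positivity
  simp only [sub_sq, Finset.sum_add_distrib, Finset.sum_sub_distrib, ← Finset.sum_mul,
    ← Finset.mul_sum, plantV, hk]
  simp
  field_simp
  ring

/-- The centering `V n² / m` cancels the contribution of the planted balls, and the factor `n / m`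
cancels against the normalization. This leaves the sum of the centred weights
`(a i - k / n) / √((m - k) V)` over the unplanted balls. -/
lemma normalized_HStat_eq {n m k : ℕ} (hn : 0 < n) (hm : 0 < m) (hkm : k ≤ m) (a : Fin n → ℕ)
    (hk : ∑ i, a i = k) (y : Fin n → ℕ) (hy : ∑ i, y i = m - k) :
    (HStat n m a (y + a) - plantV n a * (n : ℝ) ^ 2 / m) /
        Real.sqrt (((m : ℝ) - k) * plantV n a * (n : ℝ) ^ 2 / (m : ℝ) ^ 2) =
      ∑ i, (y i : ℝ) * (((a i : ℝ) - (k : ℝ) / n) / Real.sqrt (((m : ℝ) - k) * plantV n a)) := by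
  have hn' : (0 : ℝ) < n := by positivity
  have hm' : (0 : ℝ) < m := by positivity
  have hkR : ∑ i, (a i : ℝ) = k := by exact_mod_cast hk
  have hyR : ∑ i, (y i : ℝ) = m - k := by
    rw [← Nat.cast_sub hkm, ← hy]; push_cast; rfl
  have h1 : HStat n m a (y + a) - plantV n a * (n : ℝ) ^ 2 / m =
      (n / m : ℝ) * ∑ i, (y i : ℝ) * ((a i : ℝ) - (k : ℝ) / n) := by
    have e1 : HStat n m a (y + a) =
        (n / m : ℝ) * (∑ i, (y i : ℝ) * (a i : ℝ) + ∑ i, (a i : ℝ) ^ 2 - k * (m / n)) := by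
      rw [← hkR, Finset.sum_mul, ← Finset.sum_add_distrib, ← Finset.sum_sub_distrib,
        Finset.mul_sum, HStat]
      refine Finset.sum_congr rfl fun i _ => ?_
      simp only [qStat, Pi.add_apply]
      push_cast
      ring
    rw [e1]
    simp only [mul_sub, Finset.sum_sub_distrib, ← Finset.sum_mul, hyR, plantV, hkR]
    field_simp
    ring
  have h2 : Real.sqrt (((m : ℝ) - k) * plantV n a * (n : ℝ) ^ 2 / (m : ℝ) ^ 2) =
      (n / m : ℝ) * Real.sqrt (((m : ℝ) - k) * plantV n a) := by
    rw [mul_div_assoc, ← div_pow, Real.sqrt_mul' _ (by positivity), Real.sqrt_sq (by positivity),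
      mul_comm]
  rw [h1, h2, mul_div_mul_left _ _ (by positivity), Finset.sum_div]
  simp only [mul_div_assoc]

/-! ### The Hilly regime -/

/-- in the Hilly regime, under PL_A(m,n) the normalized statistic
`(H_A − V(A)n²/m)/√((m−k)V(A)n²/m²)` converges in distribution to `N(0,1)`. -/
theorem hstat_pl_normal (A : (n : ℕ) → Fin n → ℕ) (m k : ℕ → ℕ)
    (hka : ∀ n, ∑ i, A n i = k n) (hkm : ∀ n, k n ≤ m n)
    (hk : Tendsto (fun n : ℕ => (k n : ℝ) / Real.sqrt n) atTop atTop)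
    (c : ℝ) (hc : 0 < c) (hreg : HillyRegime A m k c) :
    ∀ x : ℝ, Tendsto (fun n : ℕ => probOf (plProb n (m n) (A n))
        {z | (HStat n (m n) (A n) z - plantV n (A n) * (n : ℝ) ^ 2 / m n) /
          Real.sqrt (((m n : ℝ) - k n) * plantV n (A n) * (n : ℝ) ^ 2 / (m n : ℝ) ^ 2) ≤ x})
      atTop (𝓝 (stdNormalCDF x)) := by
  intro u
  obtain ⟨h1, h2⟩ := hreg
  -- `k = 0` is excluded because division by zero would make the diverging quotient zero.
  have hpos : ∀ᶠ n : ℕ in atTop, 0 < n ∧ (0 : ℝ) < k n ∧ 0 < plantV n (A n) := by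
    filter_upwards [eventually_gt_atTop 0, h1.eventually_gt_atTop 0] with n hn h
    have hk0 : (0 : ℝ) < k n := by
      rcases (Nat.cast_nonneg (α := ℝ) (k n)).lt_or_eq with h' | h'
      · exact h'
      · rw [← h', div_zero] at h; exact absurd h (lt_irrefl _)
    refine ⟨hn, hk0, ?_⟩
    have hn' : (0 : ℝ) < (n : ℝ) ^ ((3 : ℝ) / 2) := Real.rpow_pos_of_pos (by positivity) _
    have := (div_pos_iff_of_pos_right hk0).1 h
    exact pos_of_mul_pos_right this hn'.le
  have hrpow : ∀ n : ℕ, 0 < n → (n : ℝ) ^ ((3 : ℝ) / 2) = n * Real.sqrt n := by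
    intro n hn
    have hn' : (0 : ℝ) < n := by positivity
    rw [show (3 : ℝ) / 2 = 1 + 1 / 2 by norm_num, Real.rpow_add hn', Real.rpow_one,
      Real.sqrt_eq_rpow]
  -- `m / n = (m / (V n²)) * (V n)`, where `V n = (n^{3/2} V / k) * (k / √n)` diverges.
  have hmn : Tendsto (fun n : ℕ => (m n : ℝ) / n) atTop atTop := by
    refine ((h1.atTop_mul_atTop₀ hk).atTop_mul_pos hc h2).congr' ?_
    filter_upwards [hpos] with n ⟨hn, hk0, hV⟩
    have hn' : (0 : ℝ) < n := by positivity
    have hs : (0 : ℝ) < Real.sqrt n := Real.sqrt_pos.2 hn'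
    rw [hrpow n hn]
    field_simp
  -- `k / m = (k / (n^{3/2} V)) * (V n² / m) / √n`.
  have hkm0 : Tendsto (fun n : ℕ => (k n : ℝ) / m n) atTop (𝓝 0) := by
    have hs : Tendsto (fun n : ℕ => (Real.sqrt n)⁻¹) atTop (𝓝 0) :=
      tendsto_inv_atTop_zero.comp (Real.tendsto_sqrt_atTop.comp tendsto_natCast_atTop_atTop)
    have := ((tendsto_inv_atTop_zero.comp h1).mul (h2.inv₀ hc.ne')).mul hs
    simp only [zero_mul] at this
    refine this.congr' ?_
    filter_upwards [hpos] with n ⟨hn, hk0, hV⟩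
    have hn' : (0 : ℝ) < n := by positivity
    have hs : (0 : ℝ) < Real.sqrt n := Real.sqrt_pos.2 hn'
    have hm : (0 : ℝ) < m n := hk0.trans_le (by exact_mod_cast hkm n)
    simp only [Function.comp]
    rw [hrpow n hn]
    field_simp
    rw [Real.sq_sqrt hn'.le]
  have hNn : Tendsto (fun n : ℕ => ((m n : ℝ) - k n) / n) atTop atTop := by
    refine (hmn.atTop_mul_pos one_pos (by simpa using hkm0.const_sub 1)).congr' ?_
    filter_upwards [hpos] with n ⟨hn, hk0, hV⟩
    have hn' : (0 : ℝ) < n := by positivity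
    have hm : (0 : ℝ) < m n := hk0.trans_le (by exact_mod_cast hkm n)
    field_simp
  have hδ : Tendsto (fun n : ℕ => Real.sqrt ((n : ℝ) / ((m n : ℝ) - k n))) atTop (𝓝 0) := by
    have := (Real.continuous_sqrt.tendsto 0).comp (tendsto_inv_atTop_zero.comp hNn)
    simp only [Real.sqrt_zero] at this
    refine this.congr fun n => ?_
    simp [inv_div]
  -- The row bound is `δ = √(n / N)` with `N = m - k`: each `(a i - k / n)²` is at most the sum of
  -- all of them, which is `n V`, and it is divided by `N V`.
  have key := tendsto_multLaw_Iic (fun n => m n - k n)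
    (fun n i => ((A n i : ℝ) - (k n : ℝ) / n) / Real.sqrt (((m n : ℝ) - k n) * plantV n (A n)))
    _ hδ ?_ u
  · refine key.congr' ?_
    filter_upwards [hpos] with n ⟨hn, hk0, hV⟩
    have hm : 0 < m n := lt_of_lt_of_le (by exact_mod_cast hk0) (hkm n)
    have := probOf_plProb_eq n (m n) (A n) ((hka n).trans_le (hkm n))
      (fun z => (HStat n (m n) (A n) z - plantV n (A n) * (n : ℝ) ^ 2 / m n) /
          Real.sqrt (((m n : ℝ) - k n) * plantV n (A n) * (n : ℝ) ^ 2 / (m n : ℝ) ^ 2)) _ u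
      (fun y hy => normalized_HStat_eq hn hm (hkm n) (A n) (hka n) y (by rw [hy, hka n]))
    rw [this, hka n]
  · filter_upwards [hpos, hNn.eventually_gt_atTop 0] with n ⟨hn, hk0, hV⟩ hN
    have hn' : (0 : ℝ) < n := by positivity
    have hN' : (0 : ℝ) < (m n : ℝ) - k n := (div_pos_iff_of_pos_right hn').1 hN
    have hcast : ((m n - k n : ℕ) : ℝ) = (m n : ℝ) - k n := Nat.cast_sub (hkm n)
    have hkR : ∑ i, (A n i : ℝ) = k n := by exact_mod_cast hka n
    have hsq := sum_sub_mean_sq hn (A n) (k n) hkR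
    have hNV : 0 < ((m n : ℝ) - k n) * plantV n (A n) := mul_pos hN' hV
    refine ⟨by exact_mod_cast hcast ▸ hN', Real.sqrt_nonneg _, ?_, ?_, fun i => ?_, ?_⟩
    · rw [← Finset.sum_div, Finset.sum_sub_distrib, hkR]
      simp
      left
      field_simp
      simp
    · simp only [div_pow, Real.sq_sqrt hNV.le]
      rw [← Finset.sum_div, hsq, hcast]
      field_simp
    · refine Real.abs_le_sqrt ?_
      rw [div_pow, Real.sq_sqrt hNV.le, div_le_div_iff₀ hNV hN']
      have : ((A n i : ℝ) - k n / n) ^ 2 ≤ n * plantV n (A n) := by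
        rw [← hsq]
        exact Finset.single_le_sum (f := fun i => ((A n i : ℝ) - k n / n) ^ 2)
          (fun _ _ => sq_nonneg _) (mem_univ i)
      nlinarith [mul_le_mul_of_nonneg_right this hN'.le]
    · rw [Real.sq_sqrt (by positivity), hcast, inv_eq_one_div]
      gcongr
      exact_mod_cast hn
end
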